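/- arXiv:1310.6766 — 6 statements merged into one kernel-verified Lean document; each statement's English description precedes it below -/
import Mathlib

section
/- For every integer k ≥ 2 and every integer n ≥ 4k, every simple graph on n vertices that contains no cycle of length 2k+1 as a subgraph and has exactly ⌊n²/4⌋ edges is isomorphic to the complete bipartite graph K_{⌈n/2⌉,⌊n/2⌋}. In other words, the Simonovits threshold n₀(C_{2k+1}), the least N such that for all n ≥ N the bipartite Turán graph T_{n,2} is the unique extremal C_{2k+1}-free graph, equals 4k. -/
/-!
Write `e` for the number of edges of a `C_{2k+1}`-free graph on `n` vertices and `c` for the length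
of a longest cycle `C`.

*Edges off a longest cycle* (`sum_off_cycle_le`, due to Bondy): at most `(n - c) c / 2` edges are
not spanned by `C`. The proof takes a longest path off `C` among those with one end next to a fixed
vertex of `C`, or any longest path off `C` if no edge joins `C` to the rest. Its other end, or the
set of all ends reachable from it by Pósa rotations, is a nonempty set `S` off `C` such that the
edges meeting `S` number at most `|S| c / 2`; deleting `S` and repeating gives the bound.

*Edges on a cycle* (`IsCycleSeq.degSum_le`): if `c ≥ 2k + 1`, then for every edge `v w` of the
cycle, a chord at `v` excludes a chord at `w` whose presence would close a cycle of length `2k + 1`.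
This pairing gives `deg v + deg w ≤ c`, so the cycle spans at most `c² / 4` edges.

Together, `4 e ≤ n² - (n - c)²` when `c ≥ 2k + 1`. When `c ≤ 2k`, the trivial bound on the edges of
`C` gives `e ≤ k (n - 1)`. Hence `e ≤ n² / 4` as soon as `n ≥ 4k - 1` (`degSum_bound`).

For `n = 4k`, equality forces `c = n` and equality in each of the pairings. Then chords of even
length are excluded by descent to length `2` (`IsCycleSeq.not_adj_even`), so the graph is bipartite.
For larger `n`, deleting a vertex `v` of degree at most `n / 2` leaves an extremal graph, which by
induction is a balanced complete bipartite graph with both sides of size at least `2k`. If `v` had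
neighbours on both sides, there would be a cycle of length `2k + 1` through `v`; so the whole graph
is bipartite (`exists_bipartiteOn`), and its number of edges makes it the Turán graph.

For `n = 4k - 1`, two copies of `K_{2k}` sharing a vertex (`twoCliques`) have `⌊n² / 4⌋ = 4k² - 2k`
edges, no cycle of length `2k + 1`, and a triangle.
-/

open SimpleGraph

/-- `G` contains a cycle of length `L` as a subgraph, i.e. a copy of `C_L`. -/
def ContainsCycleLength {V : Type*} (G : SimpleGraph V) (L : ℕ) : Prop :=
  ∃ (v : V) (w : G.Walk v v), w.IsCycle ∧ w.length = L

/-- The number of edges of a graph. -/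
noncomputable def edgeCount {V : Type*} (G : SimpleGraph V) : ℕ :=
  G.edgeSet.ncard

/-- The Turán number `ex(n; C_{2k+1})`: the maximum number of edges of a simple graph on
`n` vertices containing no cycle of length `2k+1`. -/
noncomputable def exC (n k : ℕ) : ℕ :=
  sSup {m | ∃ G : SimpleGraph (Fin n), ¬ ContainsCycleLength G (2 * k + 1) ∧ edgeCount G = m}

/-! ### Paths and cycles as sequences of vertices -/

/-- The vertices `q 0, …, q (m - 1)` form a path with `m` vertices of `G`; the values of `q` from
`m` on are irrelevant. -/
structure IsPathSeq {V : Type*} (G : SimpleGraph V) (m : ℕ) (q : ℕ → V) : Prop where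
  inj : ∀ i < m, ∀ j < m, q i = q j → i = j
  adj : ∀ i, i + 1 < m → G.Adj (q i) (q (i + 1))

/-- The vertices `u 0, …, u (c - 1)` form, in this cyclic order, a cycle with `c` vertices of `G`;
the values of `u` from `c` on are irrelevant. -/
structure IsCycleSeq {V : Type*} (G : SimpleGraph V) (c : ℕ) (u : ℕ → V) : Prop where
  three_le : 3 ≤ c
  inj : ∀ i < c, ∀ j < c, u i = u j → i = j
  adj : ∀ i, i + 1 < c → G.Adj (u i) (u (i + 1))
  close : G.Adj (u (c - 1)) (u 0)

section Sequences

variable {V : Type*} {G : SimpleGraph V}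

lemma exists_walk_of_seq (f : ℕ → V) (L : ℕ) (hf : ∀ i < L, G.Adj (f i) (f (i + 1))) :
    ∃ p : G.Walk (f 0) (f L), p.length = L ∧ ∀ i ≤ L, p.getVert i = f i := by
  induction L generalizing f with
  | zero => exact ⟨Walk.nil, rfl, fun i hi => by simp [Nat.le_zero.mp hi]⟩
  | succ L ih =>
    obtain ⟨p, hp, hv⟩ := ih (fun i => f (i + 1)) (fun i hi => hf (i + 1) (by lia))
    refine ⟨Walk.cons (hf 0 (by lia)) p, by simp [hp], fun i hi => ?_⟩
    cases i with
    | zero => simp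
    | succ i => rw [Walk.getVert_cons_succ]; exact hv i (by lia)

lemma IsCycleSeq.containsCycleLength {c : ℕ} {u : ℕ → V} (h : IsCycleSeq G c u) :
    ContainsCycleLength G c := by
  have h3 := h.three_le
  obtain ⟨p, hp, hv⟩ := exists_walk_of_seq u (c - 1) (fun i hi => h.adj i (by lia))
  have hpath : p.IsPath := by
    rw [← Walk.IsPath.getVert_injOn_iff]
    intro i hi j hj hij
    simp only [Set.mem_ofPred_eq] at hi hj
    rw [hv i (by lia), hv j (by lia)] at hij
    exact h.inj i (by lia) j (by lia) hij
  refine ⟨u (c - 1), Walk.cons h.close p, ?_, by simp [hp]; lia⟩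
  rw [Walk.cons_isCycle_iff]
  refine ⟨hpath, fun hmem => ?_⟩
  rw [Sym2.eq_swap] at hmem
  have := hpath.length_eq_one_of_mem_edges hmem
  lia

lemma exists_isCycleSeq {c : ℕ} (h : ContainsCycleLength G c) : ∃ u, IsCycleSeq G c u := by
  obtain ⟨v, w, hw, rfl⟩ := h
  have h3 := hw.three_le_length
  refine ⟨fun i => w.getVert (i + 1), h3, fun i hi j hj hij => ?_, fun i hi => ?_, ?_⟩
  · have := hw.getVert_injOn (by simp; lia) (by simp; lia) hij
    lia
  · exact w.adj_getVert_succ hi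
  · have := w.adj_getVert_succ (i := 0) (by lia)
    rw [Walk.getVert_zero] at this
    simpa [Nat.sub_add_cancel (by lia : 1 ≤ w.length)] using this

/-- Rotation of a cycle. -/
lemma IsCycleSeq.rotate {c : ℕ} {u : ℕ → V} (h : IsCycleSeq G c u) (a : ℕ) :
    IsCycleSeq G c (fun i => u ((a + i) % c)) := by
  have h3 := h.three_le
  have key : ∀ i, G.Adj (u (i % c)) (u ((i + 1) % c)) := by
    intro i
    have hi : i % c < c := Nat.mod_lt _ (by lia)
    by_cases hl : i % c + 1 < c
    · rw [Nat.add_mod, Nat.mod_eq_of_lt (by lia : 1 < c), Nat.mod_eq_of_lt hl]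
      exact h.adj _ hl
    · have hc : i % c = c - 1 := by lia
      rw [Nat.add_mod, Nat.mod_eq_of_lt (by lia : 1 < c), hc, Nat.sub_add_cancel (by lia),
        Nat.mod_self]
      exact h.close
  refine ⟨h3, fun i hi j hj hij => ?_, fun i _ => key (a + i), ?_⟩
  · have := h.inj _ (Nat.mod_lt _ (by lia)) _ (Nat.mod_lt _ (by lia)) hij
    have h2 : i ≡ j [MOD c] := Nat.ModEq.add_left_cancel' a this
    exact Nat.ModEq.eq_of_lt_of_lt h2 hi hj
  · have := key (a + (c - 1))
    rw [show a + (c - 1) + 1 = a + 0 + c by lia, Nat.add_mod_right] at this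
    exact this

/-- Two non-crossing chords from `u 0` and `u 1` whose other ends are `m - 3` apart close up to a
cycle of length `m`: the end of the chord at `u 1` comes first. -/
lemma IsCycleSeq.chords_down {c m : ℕ} {u : ℕ → V} (h : IsCycleSeq G c u) (hm : 3 ≤ m)
    {j : ℕ} (hj : m - 1 ≤ j) (hjc : j < c) (hx : G.Adj (u 0) (u j))
    (hy : G.Adj (u 1) (u (j - (m - 3)))) : ∃ f, IsCycleSeq G m f := by
  refine ⟨fun i => if i = 0 then u 0 else if i ≤ m - 2 then u (j + 1 - i) else u 1, hm, ?_, ?_, ?_⟩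
  · intro i hi i' hi' e
    split_ifs at e <;> first | lia | (have := h.inj _ (by lia) _ (by lia) e; lia)
  · intro i hi
    rcases Nat.eq_zero_or_pos i with rfl | hi0
    · rw [if_pos rfl, if_neg (by lia), if_pos (by lia)]
      simpa using hx
    · rw [if_neg (by lia), if_pos (by lia), if_neg (by lia)]
      by_cases hi2 : i + 1 ≤ m - 2
      · rw [if_pos hi2]
        have := (h.adj (j - i) (by lia)).symm
        rwa [show j - i + 1 = j + 1 - i by lia, show j - i = j + 1 - (i + 1) by lia] at this
      · rw [if_neg hi2, show j + 1 - i = j - (m - 3) by lia]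
        exact hy.symm
  · rw [if_neg (by lia), if_neg (by lia), if_pos rfl]
    exact (h.adj 0 (by lia)).symm

/-- Two crossing chords from `u 0` and `u 1` whose other ends are `m - 3` apart close up to a cycle
of length `m`: the end of the chord at `u 0` comes first. -/
lemma IsCycleSeq.chords_up {c m : ℕ} {u : ℕ → V} (h : IsCycleSeq G c u) (hm : 3 ≤ m)
    {j : ℕ} (hj : 2 ≤ j) (hjc : j + (m - 3) < c) (hx : G.Adj (u 0) (u j))
    (hy : G.Adj (u 1) (u (j + (m - 3)))) : ∃ f, IsCycleSeq G m f := by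
  refine ⟨fun i => if i = 0 then u 0 else if i ≤ m - 2 then u (j + i - 1) else u 1, hm, ?_, ?_, ?_⟩
  · intro i hi i' hi' e
    split_ifs at e <;> first | lia | (have := h.inj _ (by lia) _ (by lia) e; lia)
  · intro i hi
    rcases Nat.eq_zero_or_pos i with rfl | hi0
    · rw [if_pos rfl, if_neg (by lia), if_pos (by lia)]
      simpa using hx
    · rw [if_neg (by lia), if_pos (by lia), if_neg (by lia)]
      by_cases hi2 : i + 1 ≤ m - 2
      · rw [if_pos hi2]
        have := h.adj (j + i - 1) (by lia)
        rwa [show j + i - 1 + 1 = j + (i + 1) - 1 by lia] at this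
      · rw [if_neg hi2, show j + i - 1 = j + (m - 3) by lia]
        exact hy.symm
  · rw [if_neg (by lia), if_neg (by lia), if_pos rfl]
    exact (h.adj 0 (by lia)).symm

/-- A chord `u 0 — u j` and a chord from `u 1` to a later vertex, which together cut off
`c - m` vertices between their ends, give a cycle of length `m`. -/
lemma IsCycleSeq.chords_across {c m : ℕ} {u : ℕ → V} (h : IsCycleSeq G c u) (hm : 3 ≤ m)
    (hmc : m ≤ c) {j : ℕ} (hj : 2 ≤ j) (hjm : j ≤ m - 2) (hx : G.Adj (u 0) (u j))
    (hy : G.Adj (u 1) (u (j + (c + 1 - m)))) : ∃ f, IsCycleSeq G m f := by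
  refine ⟨fun i => if i = 0 then u 0 else if i ≤ j then u (j + 1 - i) else u (i + (c - m)),
    hm, ?_, ?_, ?_⟩
  · intro i hi i' hi' e
    split_ifs at e <;> first | lia | (have := h.inj _ (by lia) _ (by lia) e; lia)
  · intro i hi
    rcases Nat.eq_zero_or_pos i with rfl | hi0
    · rw [if_pos rfl, if_neg (by lia), if_pos (by lia)]
      simpa using hx
    · rw [if_neg (by lia : ¬ i = 0), if_neg (by lia : ¬ i + 1 = 0)]
      by_cases hi1 : i ≤ j
      · rw [if_pos hi1]
        by_cases hi2 : i + 1 ≤ j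
        · rw [if_pos hi2]
          have := (h.adj (j - i) (by lia)).symm
          rwa [show j - i + 1 = j + 1 - i by lia, show j - i = j + 1 - (i + 1) by lia] at this
        · rw [if_neg hi2, show j + 1 - i = 1 by lia,
            show i + 1 + (c - m) = j + (c + 1 - m) by lia]
          exact hy
      · rw [if_neg hi1, if_neg (by lia)]
        have := h.adj (i + (c - m)) (by lia)
        rwa [show i + (c - m) + 1 = i + 1 + (c - m) by lia] at this
  · rw [if_neg (by lia), if_neg (by lia), if_pos rfl, show m - 1 + (c - m) = c - 1 by lia]
    exact h.close

end Sequences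

/-! ### Degrees into a set of vertices -/

open Classical in
/-- The number of neighbours of `x` in the finite set `Y`. -/
noncomputable def degIn {V : Type*} (G : SimpleGraph V) (Y : Finset V) (x : V) : ℕ :=
  (Y.filter (G.Adj x)).card

/-- The degree sum of the subgraph induced on `Y`, i.e. twice its number of edges. -/
noncomputable def degSum {V : Type*} (G : SimpleGraph V) (Y : Finset V) : ℕ :=
  ∑ x ∈ Y, degIn G Y x

section Degrees

variable {V : Type*} {G : SimpleGraph V}

open Classical in
lemma degIn_eq_sum (Y : Finset V) (x : V) :
    degIn G Y x = ∑ y ∈ Y, if G.Adj x y then 1 else 0 := by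
  rw [degIn, Finset.card_filter]

lemma degIn_mono {Y Z : Finset V} (h : Y ⊆ Z) (x : V) : degIn G Y x ≤ degIn G Z x := by
  classical
  exact Finset.card_le_card (Finset.filter_subset_filter _ h)

lemma degIn_le_card (Y : Finset V) (x : V) : degIn G Y x ≤ Y.card := by
  classical
  exact Finset.card_filter_le _ _

lemma degIn_union [DecidableEq V] {Y Z : Finset V} (h : Disjoint Y Z) (x : V) :
    degIn G (Y ∪ Z) x = degIn G Y x + degIn G Z x := by
  classical
  simp only [degIn_eq_sum, Finset.sum_union h]

lemma sum_degIn_comm (Y Z : Finset V) : ∑ x ∈ Y, degIn G Z x = ∑ x ∈ Z, degIn G Y x := by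
  classical
  simp only [degIn_eq_sum]
  rw [Finset.sum_comm]
  simp only [G.adj_comm]

lemma degIn_eq_zero {Y : Finset V} {x : V} (h : ∀ y ∈ Y, ¬ G.Adj x y) : degIn G Y x = 0 := by
  classical
  rw [degIn, Finset.card_eq_zero, Finset.filter_eq_empty_iff]
  exact h

lemma degIn_lt_card {Y : Finset V} {x : V} (hx : x ∈ Y) : degIn G Y x < Y.card := by
  classical
  refine Finset.card_lt_card (Finset.filter_ssubset.mpr ⟨x, hx, G.irrefl⟩)

end Degrees

/-! ### Degree sums on a cycle -/

section CycleDegrees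

variable {V : Type*} [DecidableEq V] {G : SimpleGraph V}

lemma IsCycleSeq.card_image {c : ℕ} {u : ℕ → V} (h : IsCycleSeq G c u) :
    ((Finset.range c).image u).card = c := by
  rw [Finset.card_image_of_injOn, Finset.card_range]
  intro i hi j hj e
  simp only [Finset.coe_range, Set.mem_Iio] at hi hj
  exact h.inj i hi j hj e

lemma IsCycleSeq.sum_image {c : ℕ} {u : ℕ → V} (h : IsCycleSeq G c u) (g : V → ℕ) :
    ∑ x ∈ (Finset.range c).image u, g x = ∑ i ∈ Finset.range c, g (u i) := by
  rw [Finset.sum_image]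
  intro i hi j hj e
  simp only [Finset.coe_range, Set.mem_Iio] at hi hj
  exact h.inj i hi j hj e

lemma IsCycleSeq.image_rotate {c : ℕ} {u : ℕ → V} (h : IsCycleSeq G c u) (a : ℕ) :
    (Finset.range c).image (fun i => u ((a + i) % c)) = (Finset.range c).image u := by
  apply Finset.eq_of_subset_of_card_le
  · intro x hx
    simp only [Finset.mem_image, Finset.mem_range] at hx ⊢
    obtain ⟨i, _, rfl⟩ := hx
    exact ⟨_, Nat.mod_lt _ (by have := h.three_le; lia), rfl⟩
  · rw [h.card_image, (h.rotate a).card_image]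

/-- The index shift by `-(m - 3)` modulo `c - 2` on `{2, …, c - 1}`: in a graph without cycles of
length `m`, the vertex `u j` is not adjacent to `u 0` or `u (shift c m j)` is not adjacent to
`u 1`. -/
def shift (c m j : ℕ) : ℕ := if m - 1 ≤ j then j - (m - 3) else j + (c + 1 - m)

omit [DecidableEq V] in
lemma IsCycleSeq.not_both {c m : ℕ} {u : ℕ → V} (h : IsCycleSeq G c u) (hm : 3 ≤ m) (hmc : m ≤ c)
    (hfree : ¬ ∃ f, IsCycleSeq G m f) {j : ℕ} (hj : 2 ≤ j) (hjc : j < c) :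
    ¬ (G.Adj (u 0) (u j) ∧ G.Adj (u 1) (u (shift c m j))) := by
  rintro ⟨hx, hy⟩
  unfold shift at hy
  split_ifs at hy with hjm
  · exact hfree (h.chords_down hm hjm hjc hx hy)
  · exact hfree (h.chords_across hm hmc hj (by lia) hx hy)

/-- Bondy's counting argument: on a cycle with `c` vertices in a graph without cycles of length
`m`, the degrees of consecutive vertices sum to at most `c`. -/
lemma IsCycleSeq.degIn_add_le {c m : ℕ} {u : ℕ → V} (h : IsCycleSeq G c u) (hm : 3 ≤ m)
    (hmc : m ≤ c) (hfree : ¬ ∃ f, IsCycleSeq G m f) :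
    degIn G ((Finset.range c).image u) (u 0) + degIn G ((Finset.range c).image u) (u 1) ≤ c ∧
    (degIn G ((Finset.range c).image u) (u 0) + degIn G ((Finset.range c).image u) (u 1) = c →
      ∀ j, 2 ≤ j → j < c → G.Adj (u 0) (u j) ∨ G.Adj (u 1) (u (shift c m j))) := by
  classical
  have hsplit : ∀ g : ℕ → ℕ, ∑ j ∈ Finset.range c, g j = g 0 + g 1 + ∑ j ∈ Finset.Ico 2 c, g j := by
    intro g
    rw [Finset.range_eq_Ico, Finset.sum_eq_sum_Ico_succ_bot (by lia),
      Finset.sum_eq_sum_Ico_succ_bot (by lia), ← add_assoc]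
  have h01 : G.Adj (u 0) (u 1) := h.adj 0 (by lia)
  have hx : degIn G ((Finset.range c).image u) (u 0)
      = 1 + ∑ j ∈ Finset.Ico 2 c, if G.Adj (u 0) (u j) then 1 else 0 := by
    rw [degIn_eq_sum, h.sum_image, hsplit]
    simp [h01]
  have hy : degIn G ((Finset.range c).image u) (u 1)
      = 1 + ∑ j ∈ Finset.Ico 2 c, if G.Adj (u 1) (u (shift c m j)) then 1 else 0 := by
    rw [degIn_eq_sum, h.sum_image, hsplit]
    simp only [h01.symm, if_true, SimpleGraph.irrefl, if_false, Nat.add_zero]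
    congr 1
    symm
    refine Finset.sum_nbij' (shift c m)
      (fun j => if j ≤ c - m + 2 then j + (m - 3) else j - (c + 1 - m)) ?_ ?_ ?_ ?_ ?_
    all_goals intro j hj
    all_goals simp only [Finset.mem_Ico, shift] at hj ⊢
    all_goals split_ifs <;> lia
  have hle : ∀ j ∈ Finset.Ico 2 c, ((if G.Adj (u 0) (u j) then 1 else 0)
      + if G.Adj (u 1) (u (shift c m j)) then 1 else 0) ≤ 1 := by
    intro j hj
    rw [Finset.mem_Ico] at hj
    have := h.not_both hm hmc hfree hj.1 hj.2
    split_ifs <;> lia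
  have hone : ∑ j ∈ Finset.Ico 2 c, 1 = c - 2 := by simp
  rw [hx, hy]
  constructor
  · have := Finset.sum_le_sum hle
    rw [Finset.sum_add_distrib] at this
    lia
  · intro heq j hj hjc
    have h2 := (Finset.sum_eq_sum_iff_of_le hle).mp (by rw [Finset.sum_add_distrib]; lia) j
      (Finset.mem_Ico.mpr ⟨hj, hjc⟩)
    by_contra hcon
    rw [not_or] at hcon
    simp [hcon.1, hcon.2] at h2

/-- Summing Bondy's inequality around the cycle: the cycle spans at most `c ^ 2 / 4` edges, and if
it spans that many, then every consecutive pair of vertices attains equality. -/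
lemma IsCycleSeq.degSum_le {c m : ℕ} {u : ℕ → V} (h : IsCycleSeq G c u) (hm : 3 ≤ m)
    (hmc : m ≤ c) (hfree : ¬ ∃ f, IsCycleSeq G m f) :
    2 * degSum G ((Finset.range c).image u) ≤ c * c ∧
    (2 * degSum G ((Finset.range c).image u) = c * c →
      ∀ i < c, ∀ j, 2 ≤ j → j < c → G.Adj (u (i % c)) (u ((i + j) % c)) ∨
        G.Adj (u ((i + 1) % c)) (u ((i + shift c m j) % c))) := by
  set C := (Finset.range c).image u with hC
  have hrot : ∀ a, degSum G C = ∑ i ∈ Finset.range c, degIn G C (u ((a + i) % c)) := by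
    intro a
    rw [degSum, hC]
    conv_lhs => rw [← h.image_rotate a]
    rw [(h.rotate a).sum_image, h.image_rotate a]
  have htwo : 2 * degSum G C
      = ∑ i ∈ Finset.range c, (degIn G C (u (i % c)) + degIn G C (u ((i + 1) % c))) := by
    rw [two_mul, Finset.sum_add_distrib]
    nth_rewrite 1 [hrot 0]
    rw [hrot 1]
    simp only [Nat.add_comm, Nat.add_zero]
  have hpair := fun i => (h.rotate i).degIn_add_le hm hmc hfree
  simp only [h.image_rotate, ← hC, Nat.add_zero] at hpair
  have hcc : ∑ i ∈ Finset.range c, c = c * c := by simp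
  constructor
  · rw [htwo, ← hcc]
    exact Finset.sum_le_sum fun i _ => (hpair i).1
  · intro heq i hi
    rw [htwo, ← hcc] at heq
    exact (hpair i).2 ((Finset.sum_eq_sum_iff_of_le fun i _ => (hpair i).1).mp heq i
      (Finset.mem_range.mpr hi))

end CycleDegrees

/-! ### The extremal case on `4k` vertices -/

section Extremal

variable {V : Type*} [DecidableEq V] {G : SimpleGraph V}

/-- Chords of even length are impossible in the extremal case. Equality in Bondy's inequality makes
adjacency along chords of length `d < 2k` invariant under shifting by two, and the crossing-chord
exclusion lets an even `d` descend to `2`. Then all chords `v (a + 2s) — v (a + 2s + 2)` are present,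
and `2k - 1` of them with two edges of the cycle form a cycle of length `2k + 1`. -/
lemma IsCycleSeq.not_adj_even {k : ℕ} (hk : 2 ≤ k) {u : ℕ → V} (h : IsCycleSeq G (4 * k) u)
    (hfree : ¬ ∃ f, IsCycleSeq G (2 * k + 1) f)
    (heq : 2 * degSum G ((Finset.range (4 * k)).image u) = (4 * k) * (4 * k)) (i : ℕ) :
    ∀ s, 1 ≤ s → s ≤ k → ¬ G.Adj (u (i % (4 * k))) (u ((i + 2 * s) % (4 * k))) := by
  obtain ⟨v, hv⟩ : ∃ v : ℕ → V, ∀ i, v i = u (i % (4 * k)) := ⟨_, fun _ => rfl⟩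
  have hE : ∀ i j, 2 ≤ j → j < 4 * k →
      G.Adj (v i) (v (i + j)) ∨ G.Adj (v (i + 1)) (v (i + shift (4 * k) (2 * k + 1) j)) := by
    intro i j hj hjc
    have := (h.degSum_le (by lia) (by lia) hfree).2 heq (i % (4 * k)) (Nat.mod_lt _ (by lia)) j hj hjc
    simpa only [hv, Nat.mod_add_mod, Nat.mod_mod] using this
  have hN : ∀ i j, 2 ≤ j → j < 4 * k →
      ¬ (G.Adj (v i) (v (i + j)) ∧ G.Adj (v (i + 1)) (v (i + shift (4 * k) (2 * k + 1) j))) := by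
    intro i j hj hjc
    simpa only [hv, Nat.add_zero] using (h.rotate i).not_both (by lia) (by lia) hfree hj hjc
  have hU : ∀ i j, 2 ≤ j → j ≤ 2 * k + 1 →
      ¬ (G.Adj (v i) (v (i + j)) ∧ G.Adj (v (i + 1)) (v (i + (j + (2 * k + 1 - 3))))) := by
    rintro i j hj hjc ⟨h1, h2⟩
    refine hfree ((h.rotate i).chords_up (by lia) hj (by lia) ?_ ?_)
    · simpa only [hv, Nat.add_zero] using h1
    · simpa only [hv] using h2
  have hlong : ∀ i j, 2 ≤ j → j < 2 * k →
      (G.Adj (v i) (v (i + j)) ↔ ¬ G.Adj (v (i + 1)) (v (i + (j + 2 * k)))) := by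
    intro i j hj hjc
    have h1 := hE i j hj (by lia)
    have h2 := hN i j hj (by lia)
    have hs : shift (4 * k) (2 * k + 1) j = j + 2 * k := by
      unfold shift
      rw [if_neg (by lia)]
      lia
    rw [hs] at h1 h2
    tauto
  have hper : ∀ i, G.Adj (v i) (v (i + 2)) → G.Adj (v (i + 2)) (v (i + 2 + 2)) := by
    intro i h1
    rw [hlong i 2 le_rfl (by lia)] at h1
    have h2 := hE (i + 1) (2 * k + 1) (by lia) (by lia)
    have hs : shift (4 * k) (2 * k + 1) (2 * k + 1) = 3 := by
      unfold shift
      rw [if_pos (by lia)]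
      lia
    rw [hs, show i + 1 + (2 * k + 1) = i + (2 + 2 * k) by lia] at h2
    exact h2.resolve_left h1
  have hdesc : ∀ s, 1 ≤ s → s ≤ k → G.Adj (v i) (v (i + 2 * s)) → G.Adj (v i) (v (i + 2)) := by
    intro s hs
    induction s, hs using Nat.le_induction with
    | base => exact fun _ h => h
    | succ s hs ih =>
      intro hsk hadj
      refine ih (by lia) ?_
      rw [hlong i (2 * s) (by lia) (by lia)]
      intro h2
      refine hU i (2 * (s + 1)) (by lia) (by lia) ⟨hadj, ?_⟩
      rwa [show 2 * (s + 1) + (2 * k + 1 - 3) = 2 * s + 2 * k by lia]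
  intro s hs hsk hadj
  rw [← hv, ← hv] at hadj
  have h2 := hdesc s hs hsk hadj
  have hall : ∀ t, G.Adj (v (i + 2 * t)) (v (i + 2 * t + 2)) := by
    intro t
    induction t with
    | zero => exact h2
    | succ t ih => exact hper _ ih
  have hr := h.rotate i
  refine hfree ⟨fun t => if t ≤ 2 * k - 1 then v (i + 2 * t) else v (i + (4 * k - 1)),
    by lia, ?_, ?_, ?_⟩
  · intro a ha b hb e
    simp only [hv] at e
    split_ifs at e <;> first | lia | (have := hr.inj _ (by lia) _ (by lia) e; lia)
  · intro t ht
    rw [if_pos (by lia)]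
    by_cases ht2 : t + 1 ≤ 2 * k - 1
    · rw [if_pos ht2]
      exact hall t
    · rw [if_neg ht2]
      have := hr.adj (2 * t) (by lia)
      rw [show 2 * t + 1 = 4 * k - 1 by lia] at this
      simpa only [hv] using this
  · rw [if_neg (by lia), if_pos (by lia)]
    simpa only [hv] using hr.close

/-- `G` restricted to `Y` is bipartite with colour classes `Y ∩ A` and `Y \ A`. -/
def BipartiteOn {V : Type*} (G : SimpleGraph V) (Y A : Finset V) : Prop :=
  ∀ x ∈ Y, ∀ y ∈ Y, G.Adj x y → (x ∈ A ↔ y ∉ A)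

lemma IsCycleSeq.bipartiteOn {k : ℕ} (hk : 2 ≤ k) {u : ℕ → V} (h : IsCycleSeq G (4 * k) u)
    (hfree : ¬ ∃ f, IsCycleSeq G (2 * k + 1) f)
    (heq : 2 * degSum G ((Finset.range (4 * k)).image u) = (4 * k) * (4 * k)) :
    ∃ A, BipartiteOn G ((Finset.range (4 * k)).image u) A := by
  have key : ∀ i < 4 * k, ∀ s, i + 2 * s < 4 * k → ¬ G.Adj (u i) (u (i + 2 * s)) := by
    intro i hi s his hadj
    rcases Nat.eq_zero_or_pos s with rfl | hs
    · exact G.irrefl hadj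
    · by_cases hsk : s ≤ k
      · have := h.not_adj_even hk hfree heq i s hs hsk
        rw [Nat.mod_eq_of_lt hi, Nat.mod_eq_of_lt his] at this
        exact this hadj
      · have := h.not_adj_even hk hfree heq (i + 2 * s) (2 * k - s) (by lia) (by lia)
        rw [show i + 2 * s + 2 * (2 * k - s) = i + 4 * k by lia, Nat.add_mod_right,
          Nat.mod_eq_of_lt hi, Nat.mod_eq_of_lt his] at this
        exact this hadj.symm
  have key2 : ∀ i < 4 * k, ∀ j < 4 * k, i % 2 = j % 2 → ¬ G.Adj (u i) (u j) := by
    intro i hi j hj hij hadj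
    rcases Nat.le_total i j with hle | hle
    · refine key i hi ((j - i) / 2) (by lia) ?_
      rwa [show i + 2 * ((j - i) / 2) = j by lia]
    · refine key j hj ((i - j) / 2) (by lia) ?_
      rw [show j + 2 * ((i - j) / 2) = i by lia]
      exact hadj.symm
  refine ⟨((Finset.range (4 * k)).filter (fun i => i % 2 = 0)).image u, ?_⟩
  have hmem : ∀ i < 4 * k,
      (u i ∈ ((Finset.range (4 * k)).filter (fun i => i % 2 = 0)).image u ↔ i % 2 = 0) := by
    intro i hi
    simp only [Finset.mem_image, Finset.mem_filter, Finset.mem_range]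
    constructor
    · rintro ⟨j, ⟨hj, hj2⟩, e⟩
      rwa [← h.inj j hj i hi e]
    · exact fun h2 => ⟨i, ⟨hi, h2⟩, rfl⟩
  intro x hx y hy hadj
  obtain ⟨i, hi, rfl⟩ := Finset.mem_image.mp hx
  obtain ⟨j, hj, rfl⟩ := Finset.mem_image.mp hy
  rw [Finset.mem_range] at hi hj
  rw [hmem i hi, hmem j hj]
  have := fun e => key2 i hi j hj e hadj
  lia

end Extremal

/-! ### Rotations of paths -/

section Rotation

variable {V : Type*} [DecidableEq V] {G : SimpleGraph V}

/-- `q` is a path of `G` with vertex set `W` (given `m = W.card`) and last vertex `w`. -/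
structure IsSpanningPath (G : SimpleGraph V) (W : Finset V) (w : V) (q : ℕ → V) : Prop where
  path : IsPathSeq G W.card q
  mem : ∀ i < W.card, q i ∈ W
  last : q (W.card - 1) = w

open Classical in
/-- The first vertices of the paths with vertex set `W` and last vertex `w`. -/
noncomputable def startSet (G : SimpleGraph V) (W : Finset V) (w : V) : Finset V :=
  W.filter (fun x => ∃ q, IsSpanningPath G W w q ∧ q 0 = x)

omit [DecidableEq V] in
lemma mem_startSet {W : Finset V} {w x : V} :
    x ∈ startSet G W w ↔ x ∈ W ∧ ∃ q, IsSpanningPath G W w q ∧ q 0 = x := by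
  simp [startSet]

lemma IsSpanningPath.exists_eq {W : Finset V} {w : V} {q : ℕ → V} (hq : IsSpanningPath G W w q)
    {y : V} (hy : y ∈ W) : ∃ i < W.card, q i = y := by
  have himg : (Finset.range W.card).image q = W := by
    apply Finset.eq_of_subset_of_card_le
    · intro x hx
      obtain ⟨i, hi, rfl⟩ := Finset.mem_image.mp hx
      exact hq.mem i (Finset.mem_range.mp hi)
    · rw [Finset.card_image_of_injOn, Finset.card_range]
      intro i hi j hj e
      simp only [Finset.coe_range, Set.mem_Iio] at hi hj
      exact hq.path.inj i hi j hj e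
  rw [← himg] at hy
  obtain ⟨i, hi, rfl⟩ := Finset.mem_image.mp hy
  exact ⟨i, Finset.mem_range.mp hi, rfl⟩

omit [DecidableEq V] in
/-- Pósa rotation along the edge from the first vertex to the vertex `q j`. -/
lemma IsSpanningPath.rotate {W : Finset V} {w : V} {q : ℕ → V} (hq : IsSpanningPath G W w q)
    {j : ℕ} (hj : 1 ≤ j) (hjm : j < W.card) (hadj : G.Adj (q 0) (q j)) :
    IsSpanningPath G W w (fun i => if i < j then q (j - 1 - i) else q i) := by
  refine ⟨⟨?_, ?_⟩, ?_, ?_⟩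
  · intro a ha b hb e
    split_ifs at e <;> (have := hq.path.inj _ (by lia) _ (by lia) e; lia)
  · intro i hi
    by_cases h1 : i + 1 < j
    · rw [if_pos (by lia), if_pos h1]
      have := (hq.path.adj (j - 1 - (i + 1)) (by lia)).symm
      rwa [show j - 1 - (i + 1) + 1 = j - 1 - i by lia] at this
    · by_cases h2 : i < j
      · rw [if_pos h2, if_neg h1, show j - 1 - i = 0 by lia, show i + 1 = j by lia]
        exact hadj
      · rw [if_neg h2, if_neg h1]
        exact hq.path.adj i hi
  · intro i hi
    split_ifs
    · exact hq.mem _ (by lia)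
    · exact hq.mem i hi
  · rw [if_neg (by lia)]
    exact hq.last

/-- If no start vertex of a spanning path of `W` ending in `w` has a neighbour outside `W`, then
the set `S` of these start vertices meets few edges. The sum counts each edge meeting `S` twice.
Rotations show that every degree is at most `S.card`, while at most `W.card - S.card`
neighbours lie outside `S`. -/
lemma sum_startSet_le {W Y : Finset V} {w : V}
    (hcl : ∀ q, IsSpanningPath G W w q → ∀ y ∈ Y, G.Adj (q 0) y → y ∈ W) :
    ∑ x ∈ startSet G W w, (degIn G Y x + degIn G (Y \ startSet G W w) x)
      ≤ (startSet G W w).card * W.card := by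
  classical
  set S := startSet G W w with hS
  have hSW : S ⊆ W := fun x hx => (mem_startSet.mp hx).1
  rw [← smul_eq_mul]
  refine Finset.sum_le_card_nsmul _ _ _ fun x hx => ?_
  obtain ⟨-, q, hq, rfl⟩ := mem_startSet.mp hx
  have h1 : degIn G Y (q 0) ≤ S.card := by
    set J := (Finset.range W.card).filter (fun j => G.Adj (q 0) (q j)) with hJ
    have hJpos : ∀ j ∈ J, 1 ≤ j ∧ j < W.card ∧ G.Adj (q 0) (q j) := by
      intro j hj
      rw [hJ, Finset.mem_filter, Finset.mem_range] at hj
      refine ⟨?_, hj.1, hj.2⟩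
      rcases Nat.eq_zero_or_pos j with rfl | h
      · exact absurd hj.2 G.irrefl
      · exact h
    calc degIn G Y (q 0) ≤ (J.image q).card := by
          refine Finset.card_le_card fun y hy => ?_
          rw [Finset.mem_filter] at hy
          obtain ⟨i, hi, rfl⟩ := hq.exists_eq (hcl q hq y hy.1 hy.2)
          exact Finset.mem_image_of_mem _ (Finset.mem_filter.mpr ⟨Finset.mem_range.mpr hi, hy.2⟩)
      _ ≤ J.card := Finset.card_image_le
      _ ≤ S.card := by
          refine Finset.card_le_card_of_injOn (fun j => q (j - 1)) ?_ ?_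
          · intro j hj
            obtain ⟨hj1, hj2, hj3⟩ := hJpos j hj
            refine mem_startSet.mpr ⟨hq.mem _ (by lia), _, hq.rotate hj1 hj2 hj3, ?_⟩
            rw [if_pos (by lia)]
            rfl
          · intro a ha b hb e
            obtain ⟨ha1, ha2, -⟩ := hJpos a ha
            obtain ⟨hb1, hb2, -⟩ := hJpos b hb
            have := hq.path.inj _ (by lia) _ (by lia) e
            lia
  have h2 : degIn G (Y \ S) (q 0) ≤ W.card - S.card := by
    rw [← Finset.card_sdiff_of_subset hSW]
    refine Finset.card_le_card fun y hy => ?_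
    rw [Finset.mem_filter, Finset.mem_sdiff] at hy
    exact Finset.mem_sdiff.mpr ⟨hcl q hq y hy.1.1 hy.2, hy.1.2⟩
  have := Finset.card_le_card hSW
  lia

/-- Version of `sum_startSet_le` for a path `r` that may be longer than `c`, in a graph without
cycles longer than `c`: the rotations are applied to the first `min M c` vertices only, since a
neighbour of the first vertex further along the path would close a cycle longer than `c`. -/
lemma exists_sparse_of_path {Y : Finset V} {c M : ℕ} (hc : 2 ≤ c) (hM : 1 ≤ M)
    (hlong : ∀ L > c, ∀ f, IsCycleSeq G L f → ¬ ∀ i < L, f i ∈ Y)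
    {r : ℕ → V} (hr : IsPathSeq G M r) (hrY : ∀ i < M, r i ∈ Y)
    (hcl : ∀ r', IsPathSeq G M r' → (∀ i < M, ∃ j < M, r' i = r j) → r' (M - 1) = r (M - 1) →
      ∀ y ∈ Y, G.Adj (r' 0) y → ∃ i < M, y = r' i) :
    ∃ S : Finset V, S.Nonempty ∧
      (∀ x ∈ S, ∃ r', IsPathSeq G M r' ∧ (∀ i < M, ∃ j < M, r' i = r j) ∧
        r' (M - 1) = r (M - 1) ∧ r' 0 = x) ∧
      ∑ x ∈ S, (degIn G Y x + degIn G (Y \ S) x) ≤ S.card * c := by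
  obtain ⟨m, hm⟩ : ∃ m, m = min M c := ⟨_, rfl⟩
  have hmM : m ≤ M := by lia
  set W := (Finset.range m).image r with hW
  have hcard : W.card = m := by
    rw [hW, Finset.card_image_of_injOn, Finset.card_range]
    intro i hi j hj e
    simp only [Finset.coe_range, Set.mem_Iio] at hi hj
    exact hr.inj i (by lia) j (by lia) e
  have hmemW : ∀ x, x ∈ W ↔ ∃ j < m, r j = x := by simp [hW]
  have hext : ∀ q, IsSpanningPath G W (r (m - 1)) q →
      IsPathSeq G M (fun i => if i < m then q i else r i) ∧
      (∀ i < M, ∃ j < M, (if i < m then q i else r i) = r j) ∧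
      (if M - 1 < m then q (M - 1) else r (M - 1)) = r (M - 1) := by
    intro q hq
    have hlast := hq.last
    have hmem := hq.mem
    have hinj := hq.path.inj
    have hadj := hq.path.adj
    rw [hcard] at hlast hmem hinj hadj
    have hne : ∀ a < m, ∀ b < M, m ≤ b → q a ≠ r b := by
      intro a ha b hb hmb e
      obtain ⟨j, hj, hje⟩ := (hmemW _).mp (hmem a ha)
      have := hr.inj j (by lia) b hb (hje.trans e)
      lia
    refine ⟨⟨?_, ?_⟩, ?_, ?_⟩
    · intro a ha b hb e
      split_ifs at e with h1 h2 h2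
      · exact hinj a h1 b h2 e
      · exact absurd e (hne a h1 b hb (by lia))
      · exact absurd e.symm (hne b h2 a ha (by lia))
      · exact hr.inj a ha b hb e
    · intro i hi
      by_cases h1 : i + 1 < m
      · rw [if_pos h1, if_pos (by lia)]
        exact hadj i h1
      · rw [if_neg h1]
        by_cases h2 : i < m
        · rw [if_pos h2, show i = m - 1 by lia, hlast]
          exact hr.adj (m - 1) (by lia)
        · rw [if_neg h2]
          exact hr.adj i hi
    · intro i hi
      split_ifs with h1
      · obtain ⟨j, hj, hje⟩ := (hmemW _).mp (hmem i h1)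
        exact ⟨j, by lia, hje.symm⟩
      · exact ⟨i, hi, rfl⟩
    · split_ifs with h1
      · rw [show M - 1 = m - 1 by lia, hlast]
      · rfl
  have hr0 : IsSpanningPath G W (r (m - 1)) r := by
    refine ⟨⟨?_, ?_⟩, ?_, by rw [hcard]⟩
    · rw [hcard]
      exact fun i hi j hj e => hr.inj i (by lia) j (by lia) e
    · rw [hcard]
      exact fun i hi => hr.adj i (by lia)
    · rw [hcard]
      exact fun i hi => (hmemW _).mpr ⟨i, hi, rfl⟩
  refine ⟨startSet G W (r (m - 1)), ⟨r 0, mem_startSet.mpr ⟨?_, r, hr0, rfl⟩⟩, ?_, ?_⟩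
  · exact (hmemW _).mpr ⟨0, by lia, rfl⟩
  · intro x hx
    obtain ⟨-, q, hq, rfl⟩ := mem_startSet.mp hx
    obtain ⟨h1, h2, h3⟩ := hext q hq
    exact ⟨_, h1, h2, h3, if_pos (by lia)⟩
  · refine (sum_startSet_le ?_).trans (Nat.mul_le_mul_left _ (by lia))
    intro q hq y hy hadj
    obtain ⟨h1, h2, h3⟩ := hext q hq
    have hq0 : (if 0 < m then q 0 else r 0) = q 0 := if_pos (by lia)
    obtain ⟨i, hi, rfl⟩ := hcl _ h1 h2 h3 y hy (by rwa [hq0])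
    by_cases him : i < m
    · rw [if_pos him]
      exact hq.mem i (by rwa [hcard])
    · exfalso
      refine hlong (i + 1) (by lia) (fun i => if i < m then q i else r i)
        ⟨by lia, ?_, ?_, ?_⟩ ?_
      · exact fun a ha b hb e => h1.inj a (by lia) b (by lia) e
      · exact fun a ha => h1.adj a (by lia)
      · rw [Nat.add_sub_cancel, hq0]
        exact hadj.symm
      · intro a ha
        obtain ⟨j, hj, hje⟩ := h2 a (by lia)
        rw [hje]
        exact hrY j hj

end Rotation

/-! ### Edges outside a longest cycle -/

section LongestCycle

lemma exists_max_nat {P : ℕ → Prop} (b : ℕ) (h : ∃ m, P m) (hb : ∀ m, P m → m ≤ b) :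
    ∃ m, P m ∧ ∀ m', P m' → m' ≤ m := by
  classical
  obtain ⟨m, hm⟩ := h
  exact ⟨Nat.findGreatest P b, Nat.findGreatest_spec (hb m hm) hm,
    fun m' hm' => Nat.le_findGreatest (hb m' hm') hm'⟩

variable {V : Type*} {G : SimpleGraph V}

lemma IsPathSeq.cons {m : ℕ} {q : ℕ → V} (hq : IsPathSeq G m q) {y : V}
    (hy : ∀ i < m, y ≠ q i) (hadj : G.Adj (q 0) y) :
    IsPathSeq G (m + 1) (fun i => if i = 0 then y else q (i - 1)) := by
  refine ⟨?_, ?_⟩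
  · intro a ha b hb e
    split_ifs at e with h1 h2 h2
    · lia
    · exact absurd e (hy _ (by lia))
    · exact absurd e.symm (hy _ (by lia))
    · have := hq.inj _ (by lia) _ (by lia) e
      lia
  · intro i hi
    rw [if_neg (by lia : ¬ i + 1 = 0)]
    rcases Nat.eq_zero_or_pos i with rfl | hi0
    · rw [if_pos rfl]
      exact hadj.symm
    · rw [if_neg (by lia)]
      have := hq.adj (i - 1) (by lia)
      rwa [show i - 1 + 1 = i + 1 - 1 by lia] at this

lemma IsPathSeq.le_card {m : ℕ} {q : ℕ → V} (hq : IsPathSeq G m q) {X : Finset V}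
    (hX : ∀ i < m, q i ∈ X) : m ≤ X.card := by
  rw [← Finset.card_range m]
  refine Finset.card_le_card_of_injOn q (fun i hi => hX i (by simpa using hi)) ?_
  intro i hi j hj e
  simp only [Finset.coe_range, Set.mem_Iio] at hi hj
  exact hq.inj i hi j hj e

/-- A path `q` outside the cycle `u` that ends next to `u 0` and starts next to `u j` closes a
cycle with either arc of `u` between `u 0` and `u j`. -/
lemma IsPathSeq.exists_cycles {m c : ℕ} {q u : ℕ → V} (hq : IsPathSeq G m q) (hm : 1 ≤ m)
    (hu : IsCycleSeq G c u) (hne : ∀ i < m, ∀ j < c, q i ≠ u j) (hend : G.Adj (q (m - 1)) (u 0))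
    {j : ℕ} (hj : 1 ≤ j) (hjc : j < c) (hadj : G.Adj (q 0) (u j)) :
    IsCycleSeq G (m + j + 1) (fun i => if i < m then q i else u (i - m)) ∧
    IsCycleSeq G (m + 1 + (c - j))
      (fun i => if i < m then q i else if i = m then u 0 else u (c - (i - m))) := by
  refine ⟨⟨by lia, ?_, ?_, ?_⟩, ⟨by lia, ?_, ?_, ?_⟩⟩
  · intro a ha b hb e
    split_ifs at e with h1 h2 h2
    · exact hq.inj a h1 b h2 e
    · exact absurd e (hne a h1 _ (by lia))
    · exact absurd e.symm (hne b h2 _ (by lia))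
    · have := hu.inj _ (by lia) _ (by lia) e
      lia
  · intro i hi
    by_cases h1 : i + 1 < m
    · rw [if_pos h1, if_pos (by lia)]
      exact hq.adj i h1
    · rw [if_neg h1]
      by_cases h2 : i < m
      · rw [if_pos h2, show i = m - 1 by lia, show m - 1 + 1 - m = 0 by lia]
        exact hend
      · rw [if_neg h2, show i + 1 - m = i - m + 1 by lia]
        exact hu.adj _ (by lia)
  · rw [if_neg (by lia), if_pos (by lia), show m + j + 1 - 1 - m = j by lia]
    exact hadj.symm
  · intro a ha b hb e
    split_ifs at e with h1 h2 h3 h4 h5 h6 h7 h8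
    · exact hq.inj a h1 b h2 e
    · exact absurd e (hne a h1 _ (by lia))
    · exact absurd e (hne a h1 _ (by lia))
    · exact absurd e.symm (hne b (by lia) _ (by lia))
    · lia
    · have := hu.inj _ (by lia) _ (by lia) e
      lia
    · exact absurd e.symm (hne b (by lia) _ (by lia))
    · have := hu.inj _ (by lia) _ (by lia) e
      lia
    · have := hu.inj _ (by lia) _ (by lia) e
      lia
  · intro i hi
    by_cases h1 : i + 1 < m
    · rw [if_pos h1, if_pos (by lia)]
      exact hq.adj i h1
    · rw [if_neg h1]
      by_cases h2 : i < m
      · rw [if_pos h2, if_pos (by lia), show i = m - 1 by lia]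
        exact hend
      · rw [if_neg h2, if_neg (by lia : ¬ i + 1 = m)]
        by_cases h3 : i = m
        · rw [if_pos h3, show c - (i + 1 - m) = c - 1 by lia]
          exact hu.close.symm
        · rw [if_neg h3]
          have := (hu.adj (c - (i + 1 - m)) (by lia)).symm
          rwa [show c - (i + 1 - m) + 1 = c - (i - m) by lia] at this
  · rw [if_neg (by lia), if_neg (by lia), if_pos (by lia),
      show c - (m + 1 + (c - j) - 1 - m) = j by lia]
    exact hadj.symm

/-- A vertex off the cycle that is adjacent to two consecutive vertices of the cycle can be inserted
between them. -/
lemma IsCycleSeq.insert {c : ℕ} {u : ℕ → V} (hu : IsCycleSeq G c u) {x : V}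
    (hx : ∀ j < c, x ≠ u j) {j : ℕ} (hjc : j + 1 < c) (h1 : G.Adj x (u j))
    (h2 : G.Adj x (u (j + 1))) :
    IsCycleSeq G (c + 1) (fun i => if i ≤ j then u i else if i = j + 1 then x else u (i - 1)) := by
  have h3 := hu.three_le
  refine ⟨by lia, ?_, ?_, ?_⟩
  · intro a ha b hb e
    split_ifs at e <;> first
      | lia
      | exact absurd e (hx _ (by lia))
      | exact absurd e.symm (hx _ (by lia))
      | (have := hu.inj _ (by lia) _ (by lia) e; lia)
  · intro i hi
    rcases lt_trichotomy i j with h | h | h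
    · rw [if_pos (by lia), if_pos (by lia)]
      exact hu.adj i (by lia)
    · rw [if_pos (by lia), if_neg (by lia), if_pos (by lia), h]
      exact h1.symm
    · rw [if_neg (by lia : ¬ i ≤ j), if_neg (by lia : ¬ i + 1 ≤ j),
        if_neg (by lia : ¬ i + 1 = j + 1)]
      by_cases h' : i = j + 1
      · rw [if_pos h', show i + 1 - 1 = j + 1 by lia]
        exact h2
      · rw [if_neg h', show i + 1 - 1 = i - 1 + 1 by lia]
        exact hu.adj _ (by lia)
  · rw [if_neg (by lia), if_neg (by lia), if_pos (by lia), show c + 1 - 1 - 1 = c - 1 by lia]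
    exact hu.close

variable [DecidableEq V]

lemma exists_sparse_of_no_edge {X C : Finset V} {c : ℕ} (hX : X.Nonempty)
    (hc : 2 ≤ c) (hlong : ∀ L > c, ∀ f, IsCycleSeq G L f → ¬ ∀ i < L, f i ∈ X ∪ C)
    (hno : ∀ x ∈ X, ∀ y ∈ C, ¬ G.Adj x y) :
    ∃ S ⊆ X, S.Nonempty ∧
      ∑ x ∈ S, (degIn G (X ∪ C) x + degIn G ((X ∪ C) \ S) x) ≤ S.card * c := by
  obtain ⟨x₀, hx₀⟩ := hX
  obtain ⟨m, ⟨hm, q, hq, hqX⟩, hmax⟩ := exists_max_nat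
    (P := fun m => 1 ≤ m ∧ ∃ q, IsPathSeq G m q ∧ ∀ i < m, q i ∈ X) X.card
    ⟨1, le_rfl, fun _ => x₀, ⟨fun i hi j hj _ => by lia, fun i hi => by lia⟩, fun _ _ => hx₀⟩
    (fun m ⟨_, q, hq, hqX⟩ => hq.le_card hqX)
  have hin : ∀ r' : ℕ → V, (∀ i < m, ∃ j < m, r' i = q j) → ∀ i < m, r' i ∈ X := by
    intro r' h i hi
    obtain ⟨j, hj, e⟩ := h i hi
    rw [e]
    exact hqX j hj
  obtain ⟨S, hS, hSr, hsum⟩ := exists_sparse_of_path hc hm hlong hq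
    (fun i hi => Finset.mem_union_left _ (hqX i hi)) (by
      intro r' hr' himg _ y hy hadj
      have hr'X := hin r' himg
      by_contra hcon
      push Not at hcon
      rcases Finset.mem_union.mp hy with hyX | hyC
      · have := hmax (m + 1) ⟨by lia, _, hr'.cons hcon hadj, by
          intro i hi
          split_ifs
          · exact hyX
          · exact hr'X _ (by lia)⟩
        lia
      · exact hno _ (hr'X 0 (by lia)) y hyC hadj)
  refine ⟨S, fun x hx => ?_, hS, hsum⟩
  obtain ⟨r', -, himg, -, rfl⟩ := hSr x hx
  exact hin r' himg 0 (by lia)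

/-- For a short path `q` from `q 0` to the longest cycle, of at most `c / 2` vertices and of maximal
length, already the single vertex `q 0` has degree at most `c / 2`. -/
lemma degIn_le_of_short {X C : Finset V} {c m : ℕ} {q u : ℕ → V} (hdisj : Disjoint X C)
    (hlong : ∀ L > c, ∀ f, IsCycleSeq G L f → ¬ ∀ i < L, f i ∈ X ∪ C)
    (hu : IsCycleSeq G c u) (hC : C = (Finset.range c).image u) (hm : 1 ≤ m)
    (hqX : ∀ i < m, q i ∈ X)
    (hcl : ∀ y ∈ X, G.Adj (q 0) y → ∃ i < m, y = q i)
    (hgap : ∀ j, 1 ≤ j → j < c → G.Adj (q 0) (u j) → m + 1 ≤ j ∧ j + 1 + m ≤ c)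
    (hshort : 2 * m ≤ c) : 2 * degIn G (X ∪ C) (q 0) ≤ c := by
  classical
  rw [degIn_union hdisj]
  have huC : ∀ j < c, u j ∈ C := by
    intro j hj
    rw [hC]
    exact Finset.mem_image_of_mem _ (Finset.mem_range.mpr hj)
  have h1 : degIn G X (q 0) ≤ m - 1 := by
    calc degIn G X (q 0) ≤ ((Finset.Ico 1 m).image q).card := by
          refine Finset.card_le_card fun y hy => ?_
          rw [Finset.mem_filter] at hy
          obtain ⟨i, hi, rfl⟩ := hcl y hy.1 hy.2
          refine Finset.mem_image_of_mem _ (Finset.mem_Ico.mpr ⟨?_, hi⟩)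
          rcases Nat.eq_zero_or_pos i with rfl | h
          · exact absurd hy.2 G.irrefl
          · exact h
      _ ≤ (Finset.Ico 1 m).card := Finset.card_image_le
      _ = m - 1 := by simp
  set A := (Finset.Ico 1 c).filter (fun j => G.Adj (q 0) (u j)) with hA
  have hAmem : ∀ j ∈ A, m + 1 ≤ j ∧ j + 1 + m ≤ c ∧ G.Adj (q 0) (u j) := by
    intro j hj
    rw [hA, Finset.mem_filter, Finset.mem_Ico] at hj
    exact ⟨(hgap j hj.1.1 hj.1.2 hj.2).1, (hgap j hj.1.1 hj.1.2 hj.2).2, hj.2⟩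
  have h2 : degIn G C (q 0) ≤ 1 + A.card := by
    calc degIn G C (q 0) ≤ ((insert 0 A).image u).card := by
          refine Finset.card_le_card fun y hy => ?_
          rw [Finset.mem_filter, hC] at hy
          obtain ⟨hy1, hy2⟩ := hy
          obtain ⟨i, hi, rfl⟩ := Finset.mem_image.mp hy1
          rw [Finset.mem_range] at hi
          refine Finset.mem_image_of_mem _ ?_
          rcases Nat.eq_zero_or_pos i with rfl | h
          · exact Finset.mem_insert_self _ _
          · exact Finset.mem_insert_of_mem
              (Finset.mem_filter.mpr ⟨Finset.mem_Ico.mpr ⟨h, hi⟩, hy2⟩)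
      _ ≤ (insert 0 A).card := Finset.card_image_le
      _ ≤ 1 + A.card := by rw [Nat.add_comm]; exact Finset.card_insert_le _ _
  -- No two consecutive vertices of the cycle are neighbours of `q 0`, so `A` and its translate
  -- by one are disjoint subsets of an interval of length `c - 2 m`.
  have h3 : A.card + A.card ≤ c - 2 * m := by
    have hd : Disjoint A (A.image (· + 1)) := by
      rw [Finset.disjoint_left]
      intro j hj hj'
      obtain ⟨i, hi, rfl⟩ := Finset.mem_image.mp hj'
      have hi' := hAmem i hi
      have hj2 := hAmem _ hj
      have hx : ∀ a < c, q 0 ≠ u a := fun a ha e =>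
        Finset.disjoint_left.mp hdisj (hqX 0 (by lia)) (e ▸ huC a ha)
      refine hlong (c + 1) (by lia) _ (hu.insert hx (by lia) hi'.2.2 hj2.2.2) fun a ha => ?_
      split_ifs
      · exact Finset.mem_union_right _ (huC _ (by lia))
      · exact Finset.mem_union_left _ (hqX 0 (by lia))
      · exact Finset.mem_union_right _ (huC _ (by lia))
    have hcard : (A.image (· + 1)).card = A.card :=
      Finset.card_image_of_injective _ (add_left_injective 1)
    calc A.card + A.card = (A ∪ A.image (· + 1)).card := by
          rw [Finset.card_union_of_disjoint hd, hcard]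
      _ ≤ (Finset.Ico (m + 1) (c - m + 1)).card := by
          refine Finset.card_le_card fun j hj => ?_
          rw [Finset.mem_Ico]
          rcases Finset.mem_union.mp hj with h | h
          · have := hAmem j h
            lia
          · obtain ⟨i, hi, rfl⟩ := Finset.mem_image.mp h
            have := hAmem i hi
            lia
      _ = c - 2 * m := by simp; lia
  lia

/-- Take a longest path off the cycle that ends next to `u 0`. If it has at most `c / 2` vertices,
its first vertex alone is sparse. Otherwise its first vertex has no neighbour on the cycle except
possibly `u 0`, and the same holds after rotations, so `exists_sparse_of_path` applies to the path
prolonged by `u 0`. -/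
lemma exists_sparse_of_edge {X C : Finset V} {c : ℕ} {u : ℕ → V} (hdisj : Disjoint X C)
    (hlong : ∀ L > c, ∀ f, IsCycleSeq G L f → ¬ ∀ i < L, f i ∈ X ∪ C)
    (hu : IsCycleSeq G c u) (hC : C = (Finset.range c).image u)
    {x₀ : V} (hx₀ : x₀ ∈ X) (hadj₀ : G.Adj x₀ (u 0)) :
    ∃ S ⊆ X, S.Nonempty ∧
      ∑ x ∈ S, (degIn G (X ∪ C) x + degIn G ((X ∪ C) \ S) x) ≤ S.card * c := by
  have hc3 := hu.three_le
  have huC : ∀ j < c, u j ∈ C := by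
    intro j hj
    rw [hC]
    exact Finset.mem_image_of_mem _ (Finset.mem_range.mpr hj)
  have hXC : ∀ x ∈ X, ∀ j < c, x ≠ u j := fun x hx j hj e =>
    Finset.disjoint_left.mp hdisj hx (e ▸ huC j hj)
  obtain ⟨m, ⟨hm, q, hq, hqX, hend⟩, hmax⟩ := exists_max_nat
    (P := fun m => 1 ≤ m ∧ ∃ q, IsPathSeq G m q ∧ (∀ i < m, q i ∈ X) ∧ G.Adj (q (m - 1)) (u 0))
    X.card
    ⟨1, le_rfl, fun _ => x₀, ⟨fun i hi j hj _ => by lia, fun i hi => by lia⟩, fun _ _ => hx₀, hadj₀⟩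
    (fun m ⟨_, q, hq, hqX, _⟩ => hq.le_card hqX)
  have hclX : ∀ q, IsPathSeq G m q → (∀ i < m, q i ∈ X) → G.Adj (q (m - 1)) (u 0) →
      ∀ y ∈ X, G.Adj (q 0) y → ∃ i < m, y = q i := by
    intro q hq hqX hend y hy hadj
    by_contra hcon
    push Not at hcon
    have := hmax (m + 1) ⟨by lia, _, hq.cons hcon hadj, by
      intro i hi
      split_ifs
      · exact hy
      · exact hqX _ (by lia), by
      rw [if_neg (by lia)]
      exact hend⟩
    lia
  have hgap : ∀ q, IsPathSeq G m q → (∀ i < m, q i ∈ X) → G.Adj (q (m - 1)) (u 0) →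
      ∀ j, 1 ≤ j → j < c → G.Adj (q 0) (u j) → m + 1 ≤ j ∧ j + 1 + m ≤ c := by
    intro q hq hqX hend j hj hjc hadj
    obtain ⟨h1, h2⟩ := hq.exists_cycles hm hu (fun i hi => hXC _ (hqX i hi)) hend hj hjc hadj
    constructor
    · by_contra hcon
      refine hlong _ (by lia) _ h2 fun i hi => ?_
      split_ifs with h h'
      · exact Finset.mem_union_left _ (hqX i h)
      · exact Finset.mem_union_right _ (huC _ (by lia))
      · exact Finset.mem_union_right _ (huC _ (by lia))
    · by_contra hcon
      refine hlong _ (by lia) _ h1 fun i hi => ?_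
      split_ifs with h
      · exact Finset.mem_union_left _ (hqX i h)
      · exact Finset.mem_union_right _ (huC _ (by lia))
  by_cases hshort : 2 * m ≤ c
  · refine ⟨{q 0}, by simpa using hqX 0 (by lia), by simp, ?_⟩
    have h1 := degIn_le_of_short hdisj hlong hu hC hm hqX (hclX q hq hqX hend)
      (hgap q hq hqX hend) hshort
    have h2 := degIn_mono (G := G) (Finset.sdiff_subset (s := X ∪ C) (t := {q 0})) (q 0)
    simp only [Finset.sum_singleton, Finset.card_singleton]
    lia
  · -- The path is long, so its start vertices see no vertex of the cycle except possibly `u 0`.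
    obtain ⟨r, hr⟩ : ∃ r : ℕ → V, ∀ i, r i = if i < m then q i else u 0 := ⟨_, fun _ => rfl⟩
    have hrm : r m = u 0 := by rw [hr, if_neg (by lia)]
    have hrq : ∀ i < m, r i = q i := fun i hi => by rw [hr, if_pos hi]
    have hrpath : IsPathSeq G (m + 1) r := by
      refine ⟨?_, ?_⟩
      · intro a ha b hb e
        rw [hr, hr] at e
        split_ifs at e with h1 h2 h2
        · exact hq.inj a h1 b h2 e
        · exact absurd e (hXC _ (hqX a h1) 0 (by lia))
        · exact absurd e.symm (hXC _ (hqX b h2) 0 (by lia))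
        · lia
      · intro i hi
        by_cases h : i + 1 < m
        · rw [hrq i (by lia), hrq _ h]
          exact hq.adj i h
        · rw [hrq i (by lia), show i + 1 = m by lia, hrm, show i = m - 1 by lia]
          exact hend
    have hprops : ∀ r', IsPathSeq G (m + 1) r' → (∀ i < m + 1, ∃ j < m + 1, r' i = r j) →
        r' (m + 1 - 1) = r (m + 1 - 1) →
        r' m = u 0 ∧ IsPathSeq G m r' ∧ (∀ i < m, r' i ∈ X) ∧ G.Adj (r' (m - 1)) (u 0) := by
      intro r' hr' himg hlast
      rw [Nat.add_sub_cancel, hrm] at hlast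
      refine ⟨hlast, ⟨fun i hi j hj e => hr'.inj i (by lia) j (by lia) e,
        fun i hi => hr'.adj i (by lia)⟩, ?_, ?_⟩
      · intro i hi
        obtain ⟨j, hj, e⟩ := himg i (by lia)
        by_cases hjm : j < m
        · rw [e, hrq j hjm]
          exact hqX j hjm
        · rw [show j = m by lia, hrm, ← hlast] at e
          have := hr'.inj i (by lia) m (by lia) e
          lia
      · have := hr'.adj (m - 1) (by lia)
        rwa [Nat.sub_add_cancel hm, hlast] at this
    obtain ⟨S, hS, hSr, hsum⟩ := exists_sparse_of_path (M := m + 1) (by lia) (by lia) hlong hrpath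
      (by
        intro i hi
        rw [hr]
        split_ifs with h
        · exact Finset.mem_union_left _ (hqX i h)
        · exact Finset.mem_union_right _ (huC 0 (by lia))) (by
        intro r' hr' himg hlast y hy hadj
        obtain ⟨h0, h1, h2, h3⟩ := hprops r' hr' himg hlast
        rcases Finset.mem_union.mp hy with hyX | hyC
        · obtain ⟨i, hi, e⟩ := hclX r' h1 h2 h3 y hyX hadj
          exact ⟨i, by lia, e⟩
        · rw [hC] at hyC
          obtain ⟨j, hj, rfl⟩ := Finset.mem_image.mp hyC
          rw [Finset.mem_range] at hj
          rcases Nat.eq_zero_or_pos j with rfl | hj0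
          · exact ⟨m, by lia, h0.symm⟩
          · have := hgap r' h1 h2 h3 j hj0 hj hadj
            lia)
    refine ⟨S, fun x hx => ?_, hS, hsum⟩
    obtain ⟨r', hr', himg, hlast, rfl⟩ := hSr x hx
    exact (hprops r' hr' himg hlast).2.2.1 0 (by lia)

/-- Every nonempty set `X` of vertices off a longest cycle `C` (or with `C` empty) contains a
nonempty set `S` meeting at most `S.card * c / 2` edges of `X ∪ C`. -/
lemma exists_sparse {X C : Finset V} {c : ℕ} (hX : X.Nonempty) (hc : 2 ≤ c) (hdisj : Disjoint X C)
    (hlong : ∀ L > c, ∀ f, IsCycleSeq G L f → ¬ ∀ i < L, f i ∈ X ∪ C)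
    (hC : C = ∅ ∨ ∃ u, IsCycleSeq G c u ∧ C = (Finset.range c).image u) :
    ∃ S ⊆ X, S.Nonempty ∧
      ∑ x ∈ S, (degIn G (X ∪ C) x + degIn G ((X ∪ C) \ S) x) ≤ S.card * c := by
  by_cases hno : ∀ x ∈ X, ∀ y ∈ C, ¬ G.Adj x y
  · exact exists_sparse_of_no_edge hX hc hlong hno
  · push Not at hno
    obtain ⟨x, hx, y, hy, hadj⟩ := hno
    rcases hC with rfl | ⟨u, hu, hC⟩
    · simp at hy
    · have hy' := hy
      rw [hC] at hy'
      obtain ⟨a, ha, rfl⟩ := Finset.mem_image.mp hy'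
      rw [Finset.mem_range] at ha
      refine exists_sparse_of_edge hdisj hlong (hu.rotate a) (by rw [hu.image_rotate, hC]) hx ?_
      rwa [Nat.add_zero, Nat.mod_eq_of_lt ha]

/-- Bondy's lemma: at most `X.card * c / 2` edges of `X ∪ C` meet `X`. In the sum, each of these
edges is counted twice. -/
lemma sum_off_cycle_le {C : Finset V} {c : ℕ} (hc : 2 ≤ c)
    (hC : C = ∅ ∨ ∃ u, IsCycleSeq G c u ∧ C = (Finset.range c).image u) (X : Finset V)
    (hdisj : Disjoint X C) (hlong : ∀ L > c, ∀ f, IsCycleSeq G L f → ¬ ∀ i < L, f i ∈ X ∪ C) :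
    ∑ x ∈ X, (degIn G (X ∪ C) x + degIn G C x) ≤ X.card * c := by
  induction X using Finset.strongInduction with
  | H X ih =>
    rcases X.eq_empty_or_nonempty with rfl | hX
    · simp
    obtain ⟨S, hSX, hS, hsum⟩ := exists_sparse hX hc hdisj hlong hC
    have hss : X \ S ⊂ X := Finset.sdiff_ssubset hSX hS
    have hsub : X \ S ⊆ X := hss.1
    have hd1 : Disjoint (X \ S) C := hdisj.mono_left hsub
    have hih := ih (X \ S) hss hd1 (fun L hL f hf hall =>
      hlong L hL f hf fun i hi => Finset.union_subset_union_left hsub (hall i hi))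
    have hSC : Disjoint S C := hdisj.mono_left hSX
    have hsd : (X ∪ C) \ S = (X \ S) ∪ C := by
      rw [Finset.union_sdiff_distrib, Finset.sdiff_eq_self_of_disjoint hSC.symm]
    have hX : X ∪ C = ((X \ S) ∪ C) ∪ S := by
      rw [Finset.union_right_comm, Finset.sdiff_union_of_subset hSX]
    have hd2 : Disjoint ((X \ S) ∪ C) S :=
      Finset.disjoint_union_left.mpr ⟨Finset.sdiff_disjoint, hSC.symm⟩
    have hdeg : ∀ x, degIn G (X ∪ C) x = degIn G ((X \ S) ∪ C) x + degIn G S x := by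
      intro x
      rw [hX, degIn_union hd2]
    have hcard : (X \ S).card + S.card = X.card := Finset.card_sdiff_add_card_eq_card hSX
    rw [← Finset.sum_sdiff hSX, ← hcard, add_mul]
    rw [hsd] at hsum
    have hcomm := sum_degIn_comm (G := G) (X \ S) S
    have hsplit : ∀ x, degIn G ((X \ S) ∪ C) x = degIn G (X \ S) x + degIn G C x :=
      degIn_union hd1
    simp only [hdeg, hsplit, Finset.sum_add_distrib] at hsum hih ⊢
    lia

lemma degSum_union {X C : Finset V} (hdisj : Disjoint X C) :
    degSum G (X ∪ C) = ∑ x ∈ X, (degIn G (X ∪ C) x + degIn G C x) + degSum G C := by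
  have hcomm := sum_degIn_comm (G := G) X C
  simp only [degSum, degIn_union hdisj, Finset.sum_add_distrib, Finset.sum_union hdisj] at hcomm ⊢
  lia

end LongestCycle

/-! ### The bound on the number of edges -/

section Bound

variable {V : Type*} {G : SimpleGraph V}

/-- In a graph without cycles of length `2k+1`, a set of `n ≥ 4k - 1` vertices spans at most `n²/4`
edges. If a longest cycle in the set has length `c ≥ 2k+1`, the bound improves to
`(n² - (n - c)²)/4`, while for `c ≤ 2k` it improves to `k(n - 1)`. So for `n = 4k` equality forces
a cycle through all vertices of the set, and the extremal case of a cycle of length `4k` applies. -/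
lemma degSum_bound {k : ℕ} (hk : 2 ≤ k) (hfree : ¬ ∃ f, IsCycleSeq G (2 * k + 1) f)
    {Y : Finset V} (hY : 4 * k - 1 ≤ Y.card) :
    2 * degSum G Y ≤ Y.card * Y.card ∧
      (Y.card = 4 * k → 2 * degSum G Y = Y.card * Y.card → ∃ A : Finset V, BipartiteOn G Y A) := by
  classical
  set n := Y.card with hn
  by_cases hex : ∃ c, ∃ f, IsCycleSeq G c f ∧ ∀ i < c, f i ∈ Y
  · obtain ⟨c, ⟨u, hu, huY⟩, hmax⟩ := exists_max_nat n hex (by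
      rintro m ⟨f, hf, hfY⟩
      rw [← hf.card_image]
      refine Finset.card_le_card fun x hx => ?_
      obtain ⟨i, hi, rfl⟩ := Finset.mem_image.mp hx
      exact hfY i (Finset.mem_range.mp hi))
    set C := (Finset.range c).image u with hC
    have hCY : C ⊆ Y := by
      intro x hx
      obtain ⟨i, hi, rfl⟩ := Finset.mem_image.mp hx
      exact huY i (Finset.mem_range.mp hi)
    have hCc : C.card = c := hu.card_image
    have hcn : c ≤ n := hCc ▸ Finset.card_le_card hCY
    have h3 := hu.three_le
    have hXC : Y \ C ∪ C = Y := Finset.sdiff_union_of_subset hCY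
    have hdis : Disjoint (Y \ C) C := Finset.sdiff_disjoint
    have hXcard : (Y \ C).card = n - c := by rw [Finset.card_sdiff_of_subset hCY, hCc]
    have h1 := sum_off_cycle_le (G := G) (c := c) (by lia) (Or.inr ⟨u, hu, rfl⟩) (Y \ C) hdis (by
      intro L hL f hf hall
      rw [hXC] at hall
      exact absurd (hmax L ⟨f, hf, hall⟩) (by lia))
    have h2 := degSum_union (G := G) hdis
    rw [hXcard] at h1
    have h3' : degSum G Y ≤ (n - c) * c + degSum G C := by
      rw [hXC] at h2
      rw [hXC] at h1
      lia
    obtain ⟨d, hd⟩ := Nat.exists_eq_add_of_le hcn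
    rw [hd, Nat.add_sub_cancel_left] at h3'
    rcases Nat.lt_or_ge (2 * k) c with hc | hc
    · obtain ⟨hb, -⟩ := hu.degSum_le (m := 2 * k + 1) (by lia) (by lia) hfree
      rw [← hC] at hb
      refine ⟨by rw [hd]; nlinarith, fun hn4 heq => ?_⟩
      have hd0 : d = 0 := by
        by_contra hne
        have : 1 ≤ d * d := Nat.mul_pos (by lia) (by lia)
        rw [hd] at heq
        nlinarith
      have hcn' : c = 4 * k := by lia
      have hYC : Y = C := (Finset.eq_of_subset_of_card_le hCY (by lia)).symm
      subst hcn'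
      rw [hYC]
      refine hu.bipartiteOn hk hfree ?_
      rw [← hC, ← hYC, heq, hn4]
    · have hb : degSum G C ≤ c * (c - 1) := by
        calc degSum G C ≤ ∑ x ∈ C, (c - 1) := Finset.sum_le_sum fun x hx => by
              have := degIn_lt_card (G := G) hx
              lia
          _ = c * (c - 1) := by rw [Finset.sum_const, hCc, smul_eq_mul]
      obtain ⟨e, rfl⟩ : ∃ e, c = e + 1 := ⟨c - 1, by lia⟩
      obtain ⟨g, hg⟩ : ∃ g, 2 * k = e + 1 + g := ⟨2 * k - (e + 1), by lia⟩
      obtain ⟨h, hh⟩ : ∃ h, n + 1 = 4 * k + h := ⟨n + 1 - 4 * k, by lia⟩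
      have h4 : degSum G Y ≤ (e + 1) * (d + e) := by
        rw [Nat.add_sub_cancel] at hb
        nlinarith
      have h5 : degSum G Y ≤ (2 * k) * (n - 1) :=
        h4.trans (Nat.mul_le_mul (by lia) (by lia))
      obtain ⟨m, hm⟩ : ∃ m, n = m + 1 := ⟨n - 1, by lia⟩
      rw [hm, Nat.add_sub_cancel] at h5
      refine ⟨?_, fun hn4 heq => ?_⟩
      · rw [hm]
        nlinarith [Nat.mul_le_mul (show 4 * k ≤ m + 2 by lia) (le_refl m)]
      · exfalso
        rw [hm] at heq
        nlinarith [Nat.mul_le_mul (show 4 * k ≤ m + 1 by lia) (le_refl m)]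
  · have h1 := sum_off_cycle_le (G := G) (C := ∅) (c := 2) le_rfl (Or.inl rfl) Y
      (Finset.disjoint_empty_right _) (by
        intro L _ f hf hall
        exact hex ⟨L, f, hf, by simpa using hall⟩)
    have h2 : degSum G Y ≤ n * 2 := by
      refine le_trans ?_ h1
      rw [Finset.union_empty]
      exact Finset.sum_le_sum fun x _ => Nat.le_add_right _ _
    have h7 : 7 ≤ n := by lia
    refine ⟨by nlinarith, fun hn4 heq => ?_⟩
    nlinarith

end Bound

/-! ### Uniqueness by deleting a vertex of small degree -/

section Uniqueness

variable {V : Type*} [DecidableEq V] {G : SimpleGraph V}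

lemma degSum_erase {Y : Finset V} {v : V} (hv : v ∈ Y) :
    degSum G Y = degSum G (Y.erase v) + 2 * degIn G Y v := by
  have hd : Disjoint {v} (Y.erase v) := by simp
  have hU : {v} ∪ Y.erase v = Y := by
    rw [← Finset.insert_eq, Finset.insert_erase hv]
  have h := degSum_union (G := G) hd
  have h2 := degIn_union (G := G) hd v
  have h3 : degIn G {v} v = 0 := degIn_eq_zero (by simp)
  rw [hU] at h h2
  rw [Finset.sum_singleton] at h
  lia

lemma BipartiteOn.degIn_le {Y A : Finset V} (h : BipartiteOn G Y A) :
    (∀ x ∈ Y ∩ A, degIn G Y x ≤ (Y \ A).card) ∧ (∀ x ∈ Y \ A, degIn G Y x ≤ (Y ∩ A).card) := by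
  classical
  constructor
  · intro x hx
    refine Finset.card_le_card fun y hy => ?_
    simp only [Finset.mem_filter, Finset.mem_inter, Finset.mem_sdiff] at hx hy ⊢
    exact ⟨hy.1, (h x hx.1 y hy.1 hy.2).mp hx.2⟩
  · intro x hx
    refine Finset.card_le_card fun y hy => ?_
    simp only [Finset.mem_filter, Finset.mem_inter, Finset.mem_sdiff] at hx hy ⊢
    refine ⟨hy.1, ?_⟩
    by_contra hyA
    exact hx.2 ((h x hx.1 y hy.1 hy.2).mpr hyA)

lemma BipartiteOn.degSum_le {Y A : Finset V} (h : BipartiteOn G Y A) :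
    degSum G Y ≤ 2 * ((Y ∩ A).card * (Y \ A).card) ∧
      (degSum G Y = 2 * ((Y ∩ A).card * (Y \ A).card) →
        ∀ x ∈ Y ∩ A, ∀ y ∈ Y \ A, G.Adj x y) := by
  classical
  have hs : degSum G Y = ∑ x ∈ Y ∩ A, degIn G Y x + ∑ x ∈ Y \ A, degIn G Y x := by
    rw [degSum, Finset.sum_inter_add_sum_sdiff]
  obtain ⟨hA, hB⟩ := h.degIn_le
  have h1 : ∑ x ∈ Y ∩ A, degIn G Y x ≤ ∑ x ∈ Y ∩ A, (Y \ A).card := Finset.sum_le_sum hA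
  have h2 : ∑ x ∈ Y \ A, degIn G Y x ≤ ∑ x ∈ Y \ A, (Y ∩ A).card := Finset.sum_le_sum hB
  have e1 : ∑ x ∈ Y ∩ A, (Y \ A).card = (Y ∩ A).card * (Y \ A).card := by simp
  have e2 : ∑ x ∈ Y \ A, (Y ∩ A).card = (Y ∩ A).card * (Y \ A).card := by
    simp [Nat.mul_comm]
  refine ⟨by lia, fun heq x hx y hy => ?_⟩
  have h3 := (Finset.sum_eq_sum_iff_of_le hA).mp (by lia) x hx
  have hsub : Y.filter (G.Adj x) ⊆ Y \ A := by
    intro z hz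
    simp only [Finset.mem_filter, Finset.mem_inter, Finset.mem_sdiff] at hx hz ⊢
    exact ⟨hz.1, (h x hx.1 z hz.1 hz.2).mp hx.2⟩
  have h4 : Y.filter (G.Adj x) = Y \ A :=
    Finset.eq_of_subset_of_card_le hsub (le_of_eq h3.symm)
  rw [← h4] at hy
  exact (Finset.mem_filter.mp hy).2

/-- A bipartite graph on `n` vertices with `⌊n²/4⌋` edges is complete bipartite, and its sides
are balanced. -/
lemma BipartiteOn.complete {Y A : Finset V} (h : BipartiteOn G Y A)
    (heq : degSum G Y = 2 * (Y.card * Y.card / 4)) :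
    (∀ x ∈ Y ∩ A, ∀ y ∈ Y \ A, G.Adj x y) ∧
      ((Y ∩ A).card = Y.card / 2 ∧ (Y \ A).card = (Y.card + 1) / 2 ∨
        (Y ∩ A).card = (Y.card + 1) / 2 ∧ (Y \ A).card = Y.card / 2) := by
  obtain ⟨h1, h2⟩ := h.degSum_le
  have hc : (Y ∩ A).card + (Y \ A).card = Y.card := by
    rw [Finset.card_inter_add_card_sdiff]
  generalize (Y ∩ A).card = a at *
  generalize (Y \ A).card = b at *
  rw [← hc] at heq ⊢
  have h3 : (a + b) * (a + b) / 4 ≤ a * b := by lia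
  have h4 : a * b ≤ (a + b) * (a + b) / 4 := by
    rw [Nat.le_div_iff_mul_le (by norm_num)]
    zify
    nlinarith [sq_nonneg ((a : ℤ) - b)]
  refine ⟨h2 (by lia), ?_⟩
  have h5 : (a + b) * (a + b) < 4 * (a * b) + 4 := by lia
  rcases le_total a b with hab | hab
  · obtain ⟨d, rfl⟩ := Nat.exists_eq_add_of_le hab
    have : d < 2 := by nlinarith
    lia
  · obtain ⟨d, rfl⟩ := Nat.exists_eq_add_of_le hab
    have : d < 2 := by nlinarith
    lia

/-- In a finite set with at least `k` elements, a `k`-term injective sequence with a prescribed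
first term. -/
lemma exists_seq_first {S : Finset V} {k : ℕ} (hk : k ≤ S.card) {a : V} (ha : a ∈ S) :
    ∃ p : ℕ → V, p 0 = a ∧ (∀ i < k, p i ∈ S) ∧ ∀ i < k, ∀ j < k, p i = p j → i = j := by
  have hc : (S.erase a).card + 1 = S.card := Finset.card_erase_add_one ha
  obtain ⟨T, hT, hTc⟩ := Finset.exists_subset_card_eq (s := S.erase a) (n := k - 1) (by lia)
  let e := T.equivFin.symm
  have hTc' : ∀ {i}, i < k - 1 → i < T.card := by lia
  refine ⟨fun i => if h : i - 1 < T.card ∧ i ≠ 0 then (e ⟨i - 1, h.1⟩ : V) else a, by simp,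
    ?_, ?_⟩
  · intro i hi
    dsimp only
    split_ifs with h
    · exact Finset.mem_of_mem_erase (hT (e ⟨i - 1, h.1⟩).2)
    · exact ha
  · intro i hi j hj e'
    dsimp only at e'
    have hne : ∀ z, ((e z : T) : V) ≠ a := fun z => Finset.ne_of_mem_erase (hT (e z).2)
    split_ifs at e' with h1 h2 h2
    · have := e.injective (Subtype.ext e')
      simp only [Fin.mk.injEq] at this
      lia
    · exact absurd e' (hne _)
    · exact absurd e'.symm (hne _)
    · lia

/-- In a complete bipartite graph, a further vertex adjacent to both sides closes a cycle of
length `2k + 1`. -/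
lemma exists_odd_cycle {P Q : Finset V} {k : ℕ} (hk : 2 ≤ k) (hP : k ≤ P.card) (hQ : k ≤ Q.card)
    (hPQ : Disjoint P Q) (hadj : ∀ x ∈ P, ∀ y ∈ Q, G.Adj x y) {v a b : V} (hvP : v ∉ P)
    (hvQ : v ∉ Q) (ha : a ∈ P) (hb : b ∈ Q) (hva : G.Adj v a) (hvb : G.Adj v b) :
    ∃ f, IsCycleSeq G (2 * k + 1) f := by
  obtain ⟨p, hp0, hpP, hpi⟩ := exists_seq_first hP ha
  obtain ⟨q, hq0, hqQ, hqi⟩ := exists_seq_first hQ hb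
  have hpq : ∀ i < k, ∀ j < k, p i ≠ q j := fun i hi j hj e =>
    Finset.disjoint_left.mp hPQ (hpP i hi) (e ▸ hqQ j hj)
  have hvp : ∀ i < k, v ≠ p i := fun i hi e => hvP (e ▸ hpP i hi)
  have hvq : ∀ i < k, v ≠ q i := fun i hi e => hvQ (e ▸ hqQ i hi)
  -- The cycle is `v, p 0, q (k-1), p 1, q (k-2), …, p (k-1), q 0`.
  refine ⟨fun i => if i = 0 then v else if i % 2 = 1 then p (i / 2) else q (k - i / 2),
    by lia, ?_, ?_, ?_⟩
  · intro i hi j hj e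
    split_ifs at e with h1 h2 h3 h4 h5 h6 h7 h8
    · lia
    · exact absurd e (hvp _ (by lia))
    · exact absurd e (hvq _ (by lia))
    · exact absurd e.symm (hvp _ (by lia))
    · have := hpi _ (by lia) _ (by lia) e
      lia
    · exact absurd e (hpq _ (by lia) _ (by lia))
    · exact absurd e.symm (hvq _ (by lia))
    · exact absurd e.symm (hpq _ (by lia) _ (by lia))
    · have := hqi _ (by lia) _ (by lia) e
      lia
  · intro i hi
    rw [if_neg (Nat.succ_ne_zero i)]
    split_ifs with h1 h2 h3
    · subst h1
      simpa [hp0] using hva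
    · lia
    · lia
    · exact hadj _ (hpP _ (by lia)) _ (hqQ _ (by lia))
    · exact (hadj _ (hpP _ (by lia)) _ (hqQ _ (by lia))).symm
    · lia
  · have h1 : ¬ (2 * k + 1 - 1 = 0) := by lia
    have h2 : ¬ ((2 * k + 1 - 1) % 2 = 1) := by lia
    have h3 : k - (2 * k + 1 - 1) / 2 = 0 := by lia
    simp only [h1, h2, h3, if_false, if_true, hq0]
    exact hvb.symm

omit [DecidableEq V] in
lemma exists_degIn_le {Y : Finset V} (hY : Y.Nonempty)
    (h : 2 * degSum G Y ≤ Y.card * Y.card) : ∃ v ∈ Y, degIn G Y v ≤ Y.card / 2 := by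
  by_contra! hc
  have h1 : Y.card * (Y.card / 2 + 1) ≤ degSum G Y := by
    rw [degSum, ← smul_eq_mul, ← Finset.sum_const]
    exact Finset.sum_le_sum hc
  have h2 := hY.card_pos
  have h3 : Y.card < 2 * (Y.card / 2 + 1) := by lia
  nlinarith

/-- Extremal vertex sets of size at least `4k` are bipartite. -/
lemma exists_bipartiteOn {k : ℕ} (hk : 2 ≤ k) (hfree : ¬ ∃ f, IsCycleSeq G (2 * k + 1) f)
    (n : ℕ) (hn : 4 * k ≤ n) : ∀ Y : Finset V, Y.card = n → degSum G Y = 2 * (n * n / 4) →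
      ∃ A : Finset V, BipartiteOn G Y A := by
  induction n, hn using Nat.le_induction with
  | base =>
    intro Y hY hs
    refine (degSum_bound hk hfree (by lia)).2 hY ?_
    rw [hs, hY, show 4 * k * (4 * k) = 4 * (4 * k * k) by ring, Nat.mul_div_cancel_left _ (by lia)]
    ring
  | succ n hn ih =>
    intro Y hY hs
    have hb := (degSum_bound hk hfree (Y := Y) (by lia)).1
    obtain ⟨v, hv, hdv⟩ := exists_degIn_le (Finset.card_pos.mp (by lia)) hb
    have he := degSum_erase (G := G) hv
    have hcard : (Y.erase v).card = n := by rw [Finset.card_erase_of_mem hv]; lia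
    have hb' := (degSum_bound hk hfree (Y := Y.erase v) (by lia)).1
    rw [hcard] at hb'
    rw [hY] at hdv
    -- `⌊(n+1)²/4⌋ - ⌊n²/4⌋ = ⌊(n+1)/2⌋`
    have hq : (n + 1) * (n + 1) / 4 = n * n / 4 + (n + 1) / 2 := by
      rcases Nat.even_or_odd' n with ⟨m, rfl | rfl⟩
      · have e1 : (2 * m + 1) * (2 * m + 1) = 4 * (m * m + m) + 1 := by ring
        have e2 : 2 * m * (2 * m) = 4 * (m * m) := by ring
        rw [e1, e2]
        lia
      · have e1 : (2 * m + 1 + 1) * (2 * m + 1 + 1) = 4 * (m * m + 2 * m + 1) := by ring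
        have e2 : (2 * m + 1) * (2 * m + 1) = 4 * (m * m + m) + 1 := by ring
        rw [e1, e2]
        lia
    have hs' : degSum G (Y.erase v) = 2 * (n * n / 4) := by
      lia
    obtain ⟨A, hA⟩ := ih (Y.erase v) hcard hs'
    obtain ⟨hadj, hcards⟩ := hA.complete (by rw [hcard, hs'])
    rw [hcard] at hcards
    have hAv : ∀ x ∈ Y, x ≠ v → ∀ y ∈ Y, y ≠ v → G.Adj x y → (x ∈ A ↔ y ∉ A) :=
      fun x hx hxv y hy hyv => hA x (Finset.mem_erase.mpr ⟨hxv, hx⟩) y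
        (Finset.mem_erase.mpr ⟨hyv, hy⟩)
    by_cases hPv : ∃ a ∈ Y.erase v ∩ A, G.Adj v a
    · obtain ⟨a, ha, hva⟩ := hPv
      have hQv : ∀ b ∈ Y.erase v \ A, ¬ G.Adj v b := fun b hbQ hvb =>
        hfree (exists_odd_cycle hk (by lia) (by lia) (Finset.disjoint_sdiff_inter _ _).symm hadj
          (by simp) (by simp) ha hbQ hva hvb)
      have hN : ∀ y ∈ Y, G.Adj v y → y ∈ A := fun y hy hvy => by
        by_contra hyA
        exact hQv y (by simp [hy, hyA, hvy.ne']) hvy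
      refine ⟨A.erase v, fun x hx y hy hxy => ?_⟩
      have hne := hxy.ne
      by_cases hxv : x = v
      · subst hxv
        simp [hN y hy hxy, hne.symm]
      by_cases hyv : y = v
      · subst hyv
        simp [hN x hx hxy.symm, hne]
      simpa [hxv, hyv] using hAv x hx hxv y hy hyv hxy
    · have hN : ∀ y ∈ Y, G.Adj v y → y ∉ A := fun y hy hvy hyA =>
        hPv ⟨y, by simp [hy, hyA, hvy.ne'], hvy⟩
      refine ⟨insert v A, fun x hx y hy hxy => ?_⟩
      have hne := hxy.ne
      by_cases hxv : x = v
      · subst hxv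
        simp [hN y hy hxy, hne.symm]
      by_cases hyv : y = v
      · subst hyv
        simp [hN x hx hxy.symm, hne]
      simpa [hxv, hyv] using hAv x hx hxv y hy hyv hxy

end Uniqueness

/-! ### Complete bipartite graphs -/

section Iso

lemma degSum_univ {V : Type*} [Fintype V] (G : SimpleGraph V) :
    degSum G Finset.univ = 2 * edgeCount G := by
  classical
  have h := G.sum_degrees_eq_twice_card_edges
  rw [edgeCount, ← SimpleGraph.coe_edgeFinset, Set.ncard_coe_finset, ← h, degSum]
  refine Finset.sum_congr rfl fun x _ => ?_
  rw [degIn, ← SimpleGraph.card_neighborFinset_eq_degree]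
  congr 1
  ext y
  simp

lemma nonempty_iso_completeBipartiteGraph {V : Type*} [Fintype V] [DecidableEq V]
    {G : SimpleGraph V} {S : Finset V} {a b : ℕ} (hadj : ∀ x y, G.Adj x y ↔ ¬ (x ∈ S ↔ y ∈ S))
    (ha : S.card = a) (hb : Sᶜ.card = b) :
    Nonempty (G ≃g completeBipartiteGraph (Fin a) (Fin b)) := by
  have e₁ : {x // x ∈ S} ≃ Fin a := S.equivFinOfCardEq ha
  have e₂ : {x // x ∉ S} ≃ Fin b :=
    (Equiv.subtypeEquivRight fun x => Finset.mem_compl.symm).trans (Sᶜ.equivFinOfCardEq hb)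
  refine ⟨⟨(Equiv.sumCompl (· ∈ S)).symm.trans (e₁.sumCongr e₂), ?_⟩⟩
  intro x y
  rw [hadj]
  by_cases hx : x ∈ S <;> by_cases hy : y ∈ S <;>
    simp [hx, hy, completeBipartiteGraph, Equiv.sumCompl_symm_apply_of_pos,
      Equiv.sumCompl_symm_apply_of_neg]

lemma BipartiteOn.nonempty_iso {V : Type*} [Fintype V] [DecidableEq V] {G : SimpleGraph V}
    {A : Finset V} (h : BipartiteOn G Finset.univ A) {n : ℕ} (hn : Fintype.card V = n)
    (he : edgeCount G = n ^ 2 / 4) :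
    Nonempty (G ≃g completeBipartiteGraph (Fin ((n + 1) / 2)) (Fin (n / 2))) := by
  obtain ⟨hadj, hcards⟩ := h.complete (by
    rw [degSum_univ, he, Finset.card_univ, hn, pow_two])
  rw [Finset.card_univ, hn, Finset.univ_inter, ← Finset.compl_eq_univ_sdiff] at hcards
  have hiff : ∀ x y, G.Adj x y ↔ ¬ (x ∈ A ↔ y ∈ A) := by
    intro x y
    constructor
    · intro hxy
      have := h x (Finset.mem_univ x) y (Finset.mem_univ y) hxy
      tauto
    · intro hxy
      by_cases hx : x ∈ A
      · exact hadj x (by simpa using hx) y (by simp; tauto)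
      · exact (hadj y (by simp; tauto) x (by simpa using hx)).symm
  rcases hcards with ⟨h1, h2⟩ | ⟨h1, h2⟩
  · refine nonempty_iso_completeBipartiteGraph (S := Aᶜ) (fun x y => ?_) h2 (by simpa using h1)
    rw [hiff, Finset.mem_compl, Finset.mem_compl]
    tauto
  · exact nonempty_iso_completeBipartiteGraph hiff h1 h2

lemma completeBipartiteGraph_no_triangle {α β : Type*} {x y z : α ⊕ β}
    (hxy : (completeBipartiteGraph α β).Adj x y) (hyz : (completeBipartiteGraph α β).Adj y z) :
    ¬ (completeBipartiteGraph α β).Adj x z := by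
  rcases x with x | x <;> rcases y with y | y <;> rcases z with z | z <;>
    simp [completeBipartiteGraph] at *

end Iso

/-! ### Two complete graphs sharing a vertex -/

section Witness

/-- Two copies of `K_{2k}` with the vertex `2k - 1` in common, the other vertices being those below
and those above it. -/
def twoCliques (k : ℕ) : SimpleGraph (Fin (4 * k - 1)) where
  Adj i j := i ≠ j ∧ ((i.val ≤ 2 * k - 1 ∧ j.val ≤ 2 * k - 1) ∨
    (2 * k - 1 ≤ i.val ∧ 2 * k - 1 ≤ j.val))
  symm := ⟨fun _ _ h => ⟨h.1.symm, h.2.imp And.symm And.symm⟩⟩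
  loopless := ⟨fun _ h => h.1 rfl⟩

/-- Without the cut vertex, a cycle stays in one clique, and each clique has only `2k` vertices. -/
lemma twoCliques_free (k : ℕ) : ¬ ∃ f, IsCycleSeq (twoCliques k) (2 * k + 1) f := by
  -- It suffices to consider cycles that avoid the cut vertex except possibly in position `0`.
  have key : ∀ f, IsCycleSeq (twoCliques k) (2 * k + 1) f →
      ¬ ∀ i, 1 ≤ i → i < 2 * k + 1 → (f i).val ≠ 2 * k - 1 := by
    intro f hf hne
    have hk := hf.three_le
    have hcard : ∀ P : Fin (4 * k - 1) → Prop, (∃ s, ∀ x, P x → s ≤ x.val ∧ x.val < s + 2 * k) →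
        (∀ i < 2 * k + 1, P (f i)) → False := by
      rintro P ⟨s, hs⟩ hP
      have : (2 * k + 1) ≤ (Finset.Ico s (s + 2 * k)).card := by
        rw [← Finset.card_range (2 * k + 1)]
        refine Finset.card_le_card_of_injOn (fun i => (f i).val) (fun i hi => ?_) ?_
        · have hi' : i < 2 * k + 1 := by simpa using hi
          simpa using hs _ (hP i hi')
        · intro i hi j hj e
          exact hf.inj i (by simpa using hi) j (by simpa using hj) (Fin.ext e)
      simp at this
    have hstep := hf.adj
    have h0 : (twoCliques k).Adj (f 0) (f 1) := hf.adj 0 (by lia)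
    rcases Nat.lt_or_gt_of_ne (hne 1 le_rfl (by lia)) with h1 | h1
    · have hall : ∀ i, 1 ≤ i → i < 2 * k + 1 → (f i).val < 2 * k - 1 := by
        intro i hi
        induction i, hi using Nat.le_induction with
        | base => exact fun _ => h1
        | succ i hi ih =>
          intro hik
          have a := ih (by lia)
          have b := (hf.adj i hik).2
          have c := hne (i + 1) (by lia) hik
          lia
      refine hcard (fun x => x.val ≤ 2 * k - 1) ⟨0, fun x hx => by lia⟩ fun i hi => ?_
      rcases Nat.eq_zero_or_pos i with rfl | hi0
      · have := h0.2
        lia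
      · exact (hall i hi0 hi).le
    · have hall : ∀ i, 1 ≤ i → i < 2 * k + 1 → 2 * k - 1 < (f i).val := by
        intro i hi
        induction i, hi using Nat.le_induction with
        | base => exact fun _ => h1
        | succ i hi ih =>
          intro hik
          have a := ih (by lia)
          have b := (hf.adj i hik).2
          have c := hne (i + 1) (by lia) hik
          lia
      refine hcard (fun x => 2 * k - 1 ≤ x.val) ⟨2 * k - 1, fun x hx => by
        have := x.isLt
        lia⟩ fun i hi => ?_
      rcases Nat.eq_zero_or_pos i with rfl | hi0
      · have := h0.2
        lia
      · exact (hall i hi0 hi).le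
  rintro ⟨f, hf⟩
  by_cases hex : ∃ a < 2 * k + 1, (f a).val = 2 * k - 1
  · obtain ⟨a, ha, hfa⟩ := hex
    refine key _ (hf.rotate a) fun i hi hik e => ?_
    have h1 := hf.inj _ (Nat.mod_lt (a + i) (by lia)) a ha (Fin.ext (e.trans hfa.symm))
    rcases Nat.lt_or_ge (a + i) (2 * k + 1) with h2 | h2
    · rw [Nat.mod_eq_of_lt h2] at h1
      lia
    · rw [Nat.mod_eq_sub_mod h2, Nat.mod_eq_of_lt (by lia)] at h1
      lia
  · push Not at hex
    exact key f hf fun i _ hi => hex i hi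

lemma twoCliques_edgeCount {k : ℕ} (hk : 1 ≤ k) :
    edgeCount (twoCliques k) = (4 * k - 1) * (4 * k - 1) / 4 := by
  classical
  -- The cut vertex has degree `4k - 2`, every other vertex degree `2k - 1`.
  have hdeg : ∀ x : Fin (4 * k - 1), degIn (twoCliques k) Finset.univ x =
      2 * k - 1 + if x.val = 2 * k - 1 then 2 * k - 1 else 0 := by
    intro x
    have hx := x.isLt
    have e : degIn (twoCliques k) Finset.univ x =
        (((Finset.range (4 * k - 1)).filter fun y => x.val ≠ y ∧
          ((x.val ≤ 2 * k - 1 ∧ y ≤ 2 * k - 1) ∨ (2 * k - 1 ≤ x.val ∧ 2 * k - 1 ≤ y)))).card := by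
      rw [degIn, ← Finset.card_map Fin.valEmbedding]
      congr 1
      ext y
      simp only [Finset.mem_map, Finset.mem_filter, Finset.mem_univ, true_and, twoCliques,
        Finset.mem_range, Fin.valEmbedding_apply, ne_eq, Fin.ext_iff]
      constructor
      · rintro ⟨z, hz, rfl⟩
        exact ⟨z.isLt, hz⟩
      · rintro ⟨hy, h⟩
        exact ⟨⟨y, hy⟩, h, rfl⟩
    rw [e]
    rcases Nat.lt_trichotomy x.val (2 * k - 1) with h | h | h
    · have : ((Finset.range (4 * k - 1)).filter fun y => x.val ≠ y ∧
          ((x.val ≤ 2 * k - 1 ∧ y ≤ 2 * k - 1) ∨ (2 * k - 1 ≤ x.val ∧ 2 * k - 1 ≤ y))) =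
          (Finset.range (2 * k)).erase x.val := by
        ext y
        simp only [Finset.mem_filter, Finset.mem_range, Finset.mem_erase]
        lia
      rw [this, Finset.card_erase_of_mem (by simp; lia), Finset.card_range, if_neg h.ne]
      lia
    · have : ((Finset.range (4 * k - 1)).filter fun y => x.val ≠ y ∧
          ((x.val ≤ 2 * k - 1 ∧ y ≤ 2 * k - 1) ∨ (2 * k - 1 ≤ x.val ∧ 2 * k - 1 ≤ y))) =
          (Finset.range (4 * k - 1)).erase x.val := by
        ext y
        simp only [Finset.mem_filter, Finset.mem_range, Finset.mem_erase]
        lia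
      rw [this, Finset.card_erase_of_mem (by simp), Finset.card_range, if_pos h]
      lia
    · have : ((Finset.range (4 * k - 1)).filter fun y => x.val ≠ y ∧
          ((x.val ≤ 2 * k - 1 ∧ y ≤ 2 * k - 1) ∨ (2 * k - 1 ≤ x.val ∧ 2 * k - 1 ≤ y))) =
          (Finset.Ico (2 * k - 1) (4 * k - 1)).erase x.val := by
        ext y
        simp only [Finset.mem_filter, Finset.mem_range, Finset.mem_erase, Finset.mem_Ico]
        lia
      rw [this, Finset.card_erase_of_mem (by simp; lia), Nat.card_Ico, if_neg h.ne']
      lia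
  have hsum : degSum (twoCliques k) Finset.univ = (4 * k - 1) * (2 * k - 1) + (2 * k - 1) := by
    rw [degSum, Finset.sum_congr rfl fun x _ => hdeg x, Finset.sum_add_distrib,
      Finset.sum_const, Finset.card_univ, Fintype.card_fin, smul_eq_mul,
      Finset.sum_eq_single ⟨2 * k - 1, by lia⟩ (fun b _ hb => if_neg fun h => hb (Fin.ext h))
        (by simp), if_pos rfl]
  rw [degSum_univ] at hsum
  generalize edgeCount (twoCliques k) = e at hsum ⊢
  obtain ⟨m, rfl⟩ := Nat.exists_eq_add_of_le' hk
  rw [show 4 * (m + 1) - 1 = 4 * m + 3 by lia, show 2 * (m + 1) - 1 = 2 * m + 1 by lia] at hsum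
  rw [show 4 * (m + 1) - 1 = 4 * m + 3 by lia,
    show (4 * m + 3) * (4 * m + 3) = 4 * (4 * m * m + 6 * m + 2) + 1 by ring]
  have : 2 * e = 2 * (4 * m * m + 6 * m + 2) := by
    rw [hsum]; ring
  lia

end Witness

/-! ### The threshold -/

/-- For `k ≥ 2`: for every `n ≥ 4k`, every `C_{2k+1}`-free graph on `n` vertices with
`⌊n²/4⌋` edges is isomorphic to `K_{⌈n/2⌉,⌊n/2⌋}`; moreover this fails at `n = 4k-1`,
so the Simonovits threshold `n₀(C_{2k+1})` equals `4k`. -/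
theorem simonovits_threshold (k : ℕ) (hk : 2 ≤ k) :
    (∀ n : ℕ, 4 * k ≤ n → ∀ G : SimpleGraph (Fin n),
      ¬ ContainsCycleLength G (2 * k + 1) → edgeCount G = n ^ 2 / 4 →
        Nonempty (G ≃g completeBipartiteGraph (Fin ((n + 1) / 2)) (Fin (n / 2)))) ∧
    (∃ G : SimpleGraph (Fin (4 * k - 1)), ¬ ContainsCycleLength G (2 * k + 1) ∧
      edgeCount G = exC (4 * k - 1) k ∧
      ¬ Nonempty (G ≃g completeBipartiteGraph (Fin ((4 * k - 1 + 1) / 2))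
        (Fin ((4 * k - 1) / 2)))) := by
  refine ⟨fun n hn G hG he => ?_, twoCliques k, ?_, ?_, ?_⟩
  · obtain ⟨A, hA⟩ := exists_bipartiteOn hk (fun ⟨f, hf⟩ => hG hf.containsCycleLength) n hn
      Finset.univ (by simp) (by rw [degSum_univ, he, pow_two])
    exact hA.nonempty_iso (Fintype.card_fin n) he
  · exact fun h => twoCliques_free k (exists_isCycleSeq h)
  · have hgreatest : IsGreatest {m | ∃ G : SimpleGraph (Fin (4 * k - 1)),
        ¬ ContainsCycleLength G (2 * k + 1) ∧ edgeCount G = m} (edgeCount (twoCliques k)) := by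
      refine ⟨⟨_, fun h => twoCliques_free k (exists_isCycleSeq h), rfl⟩, ?_⟩
      rintro _ ⟨G, hG, rfl⟩
      have h := (degSum_bound (G := G) hk (fun ⟨f, hf⟩ => hG hf.containsCycleLength)
        (Y := Finset.univ) (by simp)).1
      rw [degSum_univ, Finset.card_univ, Fintype.card_fin] at h
      rw [twoCliques_edgeCount (by lia)]
      lia
    exact hgreatest.csSup_eq.symm
  · -- The vertices `0, 1, 2` form a triangle.
    rintro ⟨e⟩
    have hadj : ∀ i j : Fin (4 * k - 1), i ≠ j → i.val ≤ 2 → j.val ≤ 2 →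
        (completeBipartiteGraph (Fin ((4 * k - 1 + 1) / 2)) (Fin ((4 * k - 1) / 2))).Adj
          (e i) (e j) := fun i j hij hi hj =>
      e.map_rel_iff.mpr ⟨hij, Or.inl ⟨by lia, by lia⟩⟩
    exact completeBipartiteGraph_no_triangle
      (hadj ⟨0, by lia⟩ ⟨1, by lia⟩ (by simp) (by simp) (by simp))
      (hadj ⟨1, by lia⟩ ⟨2, by lia⟩ (by simp) (by simp) (by simp))
      (hadj ⟨0, by lia⟩ ⟨2, by lia⟩ (by simp) (by simp) (by simp))
end

section
/- For all integers k ≥ 1 and n ≥ k, the graph H₁(n,k) contains no cycle of length 2k+1 as a subgraph, and its number of edges is h₁(n,k) = C(k,2) + k(n-k). -/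
/-!
Write `A` for the set of the first `k` vertices. Every edge of `H₁(n,k)` has an endpoint in `A`.

*No long cycle.* Going once around a cycle `w` of length `L`, step `i < L` leads from `w.getVert i`
to `w.getVert (i + 1)`, and one of these two vertices lies in `A`. On a cycle, both `i ↦ w.getVert i`
and `i ↦ w.getVert (i + 1)` are injective for `i < L`, so at most `k` steps start in `A` and at most
`k` steps end in `A`. Hence `L ≤ 2 * k` (`H1_cycle_length_le`).

*Number of edges.* The vertices in `A` have degree `n - 1` and the `n - k` others have degree `k`
(`H1_degree`), so the handshake lemma gives `2 * e = k * (n - 1) + (n - k) * k`, which equals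
`k * (k - 1) + 2 * (k * (n - k))`.
-/

open SimpleGraph

/-- The graph `H₁(n,k)`: the complete bipartite graph `K_{k,n-k}` plus all edges inside the
partite set of size `k` (the first `k` vertices). -/
def H1 (n k : ℕ) : SimpleGraph (Fin n) :=
  SimpleGraph.fromRel (fun v w => (v : ℕ) < k ∨ (w : ℕ) < k)

lemma H1_adj {n k : ℕ} (v w : Fin n) :
    (H1 n k).Adj v w ↔ v ≠ w ∧ ((v : ℕ) < k ∨ (w : ℕ) < k) := by
  simp only [H1, SimpleGraph.fromRel_adj]
  tauto

/-- With `f i` the start (or the end) of step `i` of a cycle of length `L`, this bounds the number of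
steps that start (or end) in `A` by `k`. -/
lemma card_filter_lt_le {n k L : ℕ} (f : ℕ → Fin n) (hf : Set.InjOn f {i | i < L}) :
    ((Finset.range L).filter (fun i => (f i : ℕ) < k)).card ≤ k := by
  have h : ((Finset.range L).filter (fun i => (f i : ℕ) < k)).card ≤ (Finset.range k).card := by
    refine Finset.card_le_card_of_injOn (fun i => (f i : ℕ)) (fun i hi => ?_) ?_
    · simp only [Finset.coe_filter, Finset.mem_range, Set.mem_ofPred_eq] at hi
      simpa using hi.2
    · intro i hi j hj hij
      simp only [Finset.coe_filter, Finset.mem_range, Set.mem_ofPred_eq] at hi hj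
      exact hf hi.1 hj.1 (Fin.ext hij)
  simpa using h

lemma H1_cycle_length_le {n k : ℕ} {v : Fin n} (w : (H1 n k).Walk v v) (hw : w.IsCycle) :
    w.length ≤ 2 * k := by
  have h3 := hw.three_le_length
  have h₁ : Set.InjOn (fun i => w.getVert i) {i | i < w.length} := by
    intro i hi j hj hij
    simp only [Set.mem_ofPred_eq] at hi hj
    exact hw.getVert_injOn' (by simp only [Set.mem_ofPred_eq]; omega)
      (by simp only [Set.mem_ofPred_eq]; omega) hij
  have h₂ : Set.InjOn (fun i => w.getVert (i + 1)) {i | i < w.length} := by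
    intro i hi j hj hij
    simp only [Set.mem_ofPred_eq] at hi hj
    have := hw.getVert_injOn (by simp only [Set.mem_ofPred_eq]; omega)
      (by simp only [Set.mem_ofPred_eq]; omega) hij
    omega
  have hcover : Finset.range w.length ⊆
      (Finset.range w.length).filter (fun i => (w.getVert i : ℕ) < k) ∪
      (Finset.range w.length).filter (fun i => (w.getVert (i + 1) : ℕ) < k) := by
    intro i hi
    have hadj := ((H1_adj _ _).1 (w.adj_getVert_succ (Finset.mem_range.1 hi))).2
    simp only [Finset.mem_union, Finset.mem_filter]
    tauto
  have hle := (Finset.card_le_card hcover).trans (Finset.card_union_le _ _)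
  have c₁ := card_filter_lt_le (k := k) _ h₁
  have c₂ := card_filter_lt_le (k := k) _ h₂
  rw [Finset.card_range] at hle
  omega

lemma card_fin_lt {n k : ℕ} (hn : k ≤ n) :
    (Finset.univ.filter (fun v : Fin n => (v : ℕ) < k)).card = k := by
  rw [Fin.card_filter_val_lt, min_eq_right hn]

open Classical in
lemma H1_degree {n k : ℕ} (hn : k ≤ n) (v : Fin n) :
    (H1 n k).degree v = if (v : ℕ) < k then n - 1 else k := by
  rw [← SimpleGraph.card_neighborFinset_eq_degree]
  split_ifs with hv
  · have h : (H1 n k).neighborFinset v = Finset.univ.erase v := by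
      ext w
      simp [H1_adj, hv, eq_comm]
    rw [h, Finset.card_erase_of_mem (Finset.mem_univ v), Finset.card_fin]
  · have h : (H1 n k).neighborFinset v = Finset.univ.filter (fun w : Fin n => (w : ℕ) < k) := by
      ext w
      simp only [SimpleGraph.mem_neighborFinset, H1_adj, hv, false_or, Finset.mem_filter,
        Finset.mem_univ, true_and, and_iff_right_iff_imp]
      rintro hw rfl
      exact hv hw
    rw [h, card_fin_lt hn]

lemma H1_edgeCount {n k : ℕ} (hk : 1 ≤ k) (hn : k ≤ n) :
    edgeCount (H1 n k) = Nat.choose k 2 + k * (n - k) := by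
  classical
  have hsum := (H1 n k).sum_degrees_eq_twice_card_edges
  have hcompl : (Finset.univ.filter (fun v : Fin n => ¬ (v : ℕ) < k)).card = n - k := by
    have h := Finset.card_filter_add_card_filter_not (s := (Finset.univ : Finset (Fin n)))
      (fun v : Fin n => (v : ℕ) < k)
    rw [card_fin_lt hn, Finset.card_fin] at h
    omega
  simp only [H1_degree hn] at hsum
  rw [Finset.sum_ite, Finset.sum_const, Finset.sum_const, card_fin_lt hn, hcompl] at hsum
  have hE : edgeCount (H1 n k) = (H1 n k).edgeFinset.card := by
    rw [edgeCount, ← SimpleGraph.coe_edgeFinset, Set.ncard_coe_finset]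
  have hch : Nat.choose k 2 * 2 = k * (k - 1) := by
    rw [Nat.choose_two_right, ← Finset.sum_range_id, Finset.sum_range_id_mul_two]
  rw [hE]
  obtain ⟨m, rfl⟩ := Nat.exists_eq_add_of_le hn
  obtain ⟨j, rfl⟩ := Nat.exists_eq_add_of_le hk
  have e₁ : 1 + j + m - 1 = j + m := by omega
  simp only [smul_eq_mul, e₁, Nat.add_sub_cancel_left] at hsum hch ⊢
  nlinarith

/-- For `k ≥ 1` and `n ≥ k`, the graph `H₁(n,k)` contains no cycle of length `2k+1` and has
`h₁(n,k) = C(k,2) + k(n-k)` edges. -/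
theorem H1_free_and_size (k n : ℕ) (hk : 1 ≤ k) (hn : k ≤ n) :
    ¬ ContainsCycleLength (H1 n k) (2 * k + 1) ∧
    edgeCount (H1 n k) = Nat.choose k 2 + k * (n - k) := by
  refine ⟨?_, H1_edgeCount hk hn⟩
  rintro ⟨v, w, hw, hlen⟩
  have := H1_cycle_length_le w hw
  omega
end

section
/- For all integers k ≥ 2 and n ≥ 2k+1, the graph H₂(n,k) is 2-connected, contains no cycle of length 2k+1 as a subgraph, and has h₂(n,k) = C(2k-1,2) + 2(n-2k+1) edges. -/
/-!
The vertices `0` and `1` are adjacent to every other vertex, and a vertex outside the clique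
(index at least `2k-1`) has no other neighbours.

* Deleting one vertex leaves at least one of `0`, `1`, which then dominates what remains, so
  `H₂(n,k)` is 2-connected.
* A cycle of length `2k+1` visits at least two vertices `a ≠ b` outside the clique. On the cycle,
  both neighbours of `a`, and both neighbours of `b`, are `0` and `1`, so the cycle closes up as
  `a, 0, b, 1` and has length `4 < 2k+1`.
* The edges are the pairs inside the clique together with the pairs formed by one of `0`, `1` and
  a vertex outside the clique; these two families are disjoint.
-/

open SimpleGraph

/-- The graph `H₂(n,k)`: a complete graph on the first `2k-1` vertices, whose first two
vertices are moreover joined to all remaining vertices. -/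
def H2 (n k : ℕ) : SimpleGraph (Fin n) :=
  SimpleGraph.fromRel (fun v w =>
    ((v : ℕ) < 2 * k - 1 ∧ (w : ℕ) < 2 * k - 1) ∨ (v : ℕ) < 2 ∨ (w : ℕ) < 2)

/-- A graph is 2-connected if it has at least 3 vertices and deleting any single vertex
leaves a connected graph. -/
def IsTwoConnected {V : Type*} (G : SimpleGraph V) : Prop :=
  3 ≤ Nat.card V ∧ ∀ v : V, (G.induce ({v}ᶜ : Set V)).Connected

lemma H2_adj {n k : ℕ} {a b : Fin n} : (H2 n k).Adj a b ↔
    a ≠ b ∧ (((a : ℕ) < 2 * k - 1 ∧ (b : ℕ) < 2 * k - 1) ∨ (a : ℕ) < 2 ∨ (b : ℕ) < 2) := by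
  simp only [H2, SimpleGraph.fromRel_adj]
  tauto

/-- A vertex outside the clique has only `0` and `1` as neighbours. -/
lemma H2_adj_outer {n k : ℕ} {a b : Fin n} (hk : 2 ≤ k) (ha : 2 * k - 1 ≤ (a : ℕ))
    (h : (H2 n k).Adj a b) : (b : ℕ) < 2 := by
  have := (H2_adj.1 h).2
  omega

lemma H2_twoConnected {k n : ℕ} (hk : 2 ≤ k) (hn : 2 * k + 1 ≤ n) :
    IsTwoConnected (H2 n k) := by
  refine ⟨by rw [Nat.card_fin]; omega, fun v => ?_⟩
  obtain ⟨u, hu2, huv⟩ : ∃ u : Fin n, (u : ℕ) < 2 ∧ u ≠ v := by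
    by_cases h : (v : ℕ) = 0
    · exact ⟨⟨1, by omega⟩, by simp, fun e => by simp [← e] at h⟩
    · exact ⟨⟨0, by omega⟩, by simp, fun e => h (by simp [← e])⟩
  rw [SimpleGraph.connected_iff_exists_forall_reachable]
  refine ⟨⟨u, by simpa using huv⟩, fun w => ?_⟩
  by_cases huw : u = (w : Fin n)
  · have : (⟨u, by simpa using huv⟩ : ({v}ᶜ : Set (Fin n))) = w := Subtype.ext huw
    rw [this]
  · apply SimpleGraph.Adj.reachable
    rw [SimpleGraph.comap_adj]
    exact H2_adj.2 ⟨huw, Or.inr (Or.inl hu2)⟩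

/-- A cycle based at a vertex outside the clique that passes through another such vertex has
length 4. -/
lemma H2_cycle_length_eq_four {k n : ℕ} (hk : 2 ≤ k) {a b : Fin n} (ha : 2 * k - 1 ≤ (a : ℕ))
    (hb : 2 * k - 1 ≤ (b : ℕ)) (hab : a ≠ b) (w : (H2 n k).Walk a a) (hw : w.IsCycle)
    (hbw : b ∈ w.support) : w.length = 4 := by
  obtain ⟨j, hj, hjl⟩ := SimpleGraph.Walk.mem_support_iff_exists_getVert.1 hbw
  have h3 := hw.three_le_length
  have inj := hw.getVert_injOn
  have hj0 : j ≠ 0 := by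
    rintro rfl
    exact hab (by simpa using hj)
  have hjm : j ≠ w.length := by
    rintro rfl
    exact hab (by simpa using hj)
  have adj (i : ℕ) (hi : i < w.length) := w.adj_getVert_succ hi
  have p1 : (w.getVert 1 : ℕ) < 2 :=
    H2_adj_outer hk ha (by simpa using adj 0 (by omega))
  have p2 : (w.getVert (w.length - 1) : ℕ) < 2 := by
    have := adj (w.length - 1) (by omega)
    rw [Nat.sub_add_cancel (by omega), SimpleGraph.Walk.getVert_length] at this
    exact H2_adj_outer hk ha this.symm
  have p3 : (w.getVert (j + 1) : ℕ) < 2 := by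
    have := adj j (by omega)
    rw [hj] at this
    exact H2_adj_outer hk hb this
  have p4 : (w.getVert (j - 1) : ℕ) < 2 := by
    have := adj (j - 1) (by omega)
    rw [Nat.sub_add_cancel (by omega), hj] at this
    exact H2_adj_outer hk hb this.symm
  -- The base point occurs as `getVert 0` and `getVert w.length`, but is not `0` or `1`.
  have hj1 : j - 1 ≠ 0 := by
    intro h
    rw [h, SimpleGraph.Walk.getVert_zero] at p4
    omega
  have hj2 : j + 1 ≠ w.length := by
    intro h
    rw [h, SimpleGraph.Walk.getVert_length] at p3
    omega
  have ne (x y : ℕ) (hx : 1 ≤ x ∧ x ≤ w.length) (hy : 1 ≤ y ∧ y ≤ w.length) (hxy : x ≠ y) :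
      (w.getVert x : ℕ) ≠ w.getVert y :=
    fun h => hxy (inj hx hy (Fin.ext h))
  -- The positions `1`, `w.length - 1`, `j - 1`, `j + 1` all carry the vertex `0` or `1`, and each
  -- of these occurs at one position only, so `j - 1 = 1` and `j + 1 = w.length - 1`.
  have q1 := ne 1 (w.length - 1) (by omega) (by omega) (by omega)
  have q2 := ne (j - 1) (j + 1) (by omega) (by omega) (by omega)
  have q3 := ne 1 (j + 1) (by omega) (by omega) (by omega)
  have q4 : j - 1 = 1 := by
    by_contra h
    have := ne 1 (j - 1) (by omega) (by omega) (by omega)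
    omega
  have q5 : j + 1 = w.length - 1 := by
    by_contra h
    have := ne (w.length - 1) (j + 1) (by omega) (by omega) (by omega)
    omega
  omega

lemma H2_no_cycle {k n : ℕ} (hk : 2 ≤ k) :
    ¬ ContainsCycleLength (H2 n k) (2 * k + 1) := by
  rintro ⟨v, w, hw, hl⟩
  -- Position `0` is left out, since it repeats the vertex at position `w.length`.
  have hcard : ((Finset.Icc 1 w.length).image w.getVert).card = 2 * k + 1 := by
    rw [Finset.card_image_of_injOn, Nat.card_Icc]
    · omega
    · intro x hx y hy h
      exact hw.getVert_injOn (by simpa using hx) (by simpa using hy) h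
  have hin : (Finset.univ.filter fun x : Fin n => (x : ℕ) < 2 * k - 1).card ≤ 2 * k - 1 := by
    rw [Fin.card_filter_val_lt]
    omega
  have hout := Finset.le_card_sdiff (Finset.univ.filter fun x : Fin n => (x : ℕ) < 2 * k - 1)
    ((Finset.Icc 1 w.length).image w.getVert)
  obtain ⟨a, ha, b, hb, hab⟩ := Finset.one_lt_card.1 (lt_of_lt_of_le (by omega) hout)
  simp only [Finset.mem_sdiff, Finset.mem_image, Finset.mem_filter, Finset.mem_univ, true_and,
    not_lt] at ha hb
  obtain ⟨⟨i, -, hi⟩, ha⟩ := ha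
  obtain ⟨⟨j, -, hj⟩, hb⟩ := hb
  have haw : a ∈ w.support := hi ▸ w.getVert_mem_support i
  have hbw : b ∈ w.support := hj ▸ w.getVert_mem_support j
  have := H2_cycle_length_eq_four hk ha hb hab (w.rotate a haw) (hw.rotate haw)
    ((w.mem_support_rotate_iff a haw).2 hbw)
  rw [SimpleGraph.Walk.length_rotate] at this
  omega

lemma H2_edgeCount {k n : ℕ} (hk : 2 ≤ k) (hn : 2 * k + 1 ≤ n) :
    edgeCount (H2 n k) = Nat.choose (2 * k - 1) 2 + 2 * (n - 2 * k + 1) := by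
  classical
  let K : Finset (Fin n) := Finset.univ.filter fun x => (x : ℕ) < 2 * k - 1
  let D : Finset (Fin n) := Finset.univ.filter fun x => (x : ℕ) < 2
  let E₁ : Finset (Sym2 (Fin n)) := K.offDiag.image Sym2.mk.uncurry
  let E₂ : Finset (Sym2 (Fin n)) := (D ×ˢ Kᶜ).image Sym2.mk.uncurry
  have hK : K.card = 2 * k - 1 := by
    rw [Fin.card_filter_val_lt]
    omega
  have hD : D.card = 2 := by
    rw [Fin.card_filter_val_lt]
    omega
  have hE : (H2 n k).edgeSet = ((E₁ ∪ E₂ : Finset _) : Set (Sym2 (Fin n))) := by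
    ext e
    induction e with | _ a b =>
    simp only [SimpleGraph.mem_edgeSet, H2_adj, Finset.coe_union, Set.mem_union, Finset.mem_coe,
      E₁, E₂, Finset.mem_image, Finset.mem_offDiag, Finset.mem_product, K, D, Finset.mem_filter,
      Finset.mem_univ, true_and, Finset.mem_compl, Prod.exists, Function.uncurry, Sym2.eq_iff]
    constructor
    · rintro ⟨hne, h⟩
      by_cases ha : (a : ℕ) < 2 * k - 1 <;> by_cases hb : (b : ℕ) < 2 * k - 1
      · exact Or.inl ⟨a, b, ⟨ha, hb, hne⟩, by simp⟩
      · exact Or.inr ⟨a, b, ⟨by omega, hb⟩, by simp⟩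
      · exact Or.inr ⟨b, a, ⟨by omega, ha⟩, by simp⟩
      · omega
    · rintro (⟨x, y, ⟨hx, hy, hxy⟩, (⟨rfl, rfl⟩ | ⟨rfl, rfl⟩)⟩ |
        ⟨x, y, ⟨hx, hy⟩, (⟨rfl, rfl⟩ | ⟨rfl, rfl⟩)⟩) <;> grind
  have hdisj : Disjoint E₁ E₂ := by
    rw [Finset.disjoint_left]
    intro e h1 h2
    simp only [E₁, E₂, K, D, Finset.mem_image, Finset.mem_offDiag, Finset.mem_product,
      Finset.mem_filter, Finset.mem_univ, true_and, Finset.mem_compl, Prod.exists,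
      Function.uncurry] at h1 h2
    obtain ⟨x, y, ⟨hx, hy, -⟩, rfl⟩ := h1
    obtain ⟨u, v, ⟨hu, hv⟩, h⟩ := h2
    rcases Sym2.eq_iff.1 h with ⟨rfl, rfl⟩ | ⟨rfl, rfl⟩ <;> contradiction
  have h₁ : E₁.card = (2 * k - 1).choose 2 := by
    rw [← hK]
    exact Sym2.card_image_offDiag K
  have h₂ : E₂.card = 2 * (n - 2 * k + 1) := by
    rw [Finset.card_image_of_injOn, Finset.card_product, Finset.card_compl, hK, hD,
      Fintype.card_fin]
    · congr 1
      omega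
    · rintro ⟨a, b⟩ h ⟨c, d⟩ h' heq
      simp only [K, D, Finset.coe_product, Set.mem_prod, Finset.mem_coe, Finset.mem_filter,
        Finset.mem_univ, true_and, Finset.mem_compl] at h h'
      rcases Sym2.eq_iff.1 heq with ⟨rfl, rfl⟩ | ⟨rfl, rfl⟩
      · rfl
      · dsimp only at h h'
        omega
  rw [edgeCount, hE, Set.ncard_coe_finset, Finset.card_union_of_disjoint hdisj, h₁, h₂]

/-- For `k ≥ 2` and `n ≥ 2k+1`, the graph `H₂(n,k)` is 2-connected, contains no cycle of
length `2k+1`, and has `h₂(n,k) = C(2k-1,2) + 2(n-2k+1)` edges. -/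
theorem H2_properties (k n : ℕ) (hk : 2 ≤ k) (hn : 2 * k + 1 ≤ n) :
    IsTwoConnected (H2 n k) ∧
    ¬ ContainsCycleLength (H2 n k) (2 * k + 1) ∧
    edgeCount (H2 n k) = Nat.choose (2 * k - 1) 2 + 2 * (n - 2 * k + 1) :=
  ⟨H2_twoConnected hk hn, H2_no_cycle hk, H2_edgeCount hk hn⟩
end

section
/- For every integer k ≥ 2, the maximum number of edges of an n-vertex cactus (a connected graph all of whose 2-connected blocks are complete graphs) that contains no cycle of length 2k+1 as a subgraph equals g(n,k) = (s-1)·C(2k,2) + C(r,2), where n = (s-1)(2k-1) + r with integers s ≥ 1 and 2 ≤ r ≤ 2k; moreover the maximum is attained only by cacti all of whose blocks have exactly 2k vertices with at most one exceptional smaller block. -/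
/-!
The blocks of a cactus are cliques, any two of which share at most one vertex, so they partition
the edges, and a cactus with blocks of orders `nᵢ` has `∑ C(nᵢ, 2)` edges (`IsCactus.edgeCount_eq`).
A clique on `2k + 1` or more vertices contains `C_{2k+1}`, so every `xᵢ = nᵢ - 1` lies between `1`
and `m = 2k - 1`.

The block orders satisfy `∑ xᵢ ≤ n - 1` (`IsCactus.sum_card_sub_one_lt`). Indeed, replace every block
by a spanning star. The vertices of a cycle of `G` form a block set and thus lie in one block, so a
cycle in the union of the stars would lie in one star, which is absurd; hence this union is a forest
with `∑ xᵢ` edges. Only this inequality is needed, not the equality, because the optimum below is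
monotone in the budget.

It remains to maximize the convex sum `∑ xᵢ (xᵢ + 1) = 2 ∑ C(nᵢ, 2)` subject to `1 ≤ xᵢ ≤ m` and
`∑ xᵢ ≤ (s - 1) m + (r - 1)`. Removing one part at a time from the budget (`split_budget`) gives the
bound `sum_weight_le`, and tracking strictness gives `sum_weight_eq`: at an optimum at most one part
differs from `m`.

The bound is attained by the windmill, in which `s - 1` cliques of order `2k` and one of order `r`
share a common vertex.
-/

open SimpleGraph

/-- A vertex set inducing a 2-connected subgraph or a single edge. -/
def IsBlockSet {V : Type*} (G : SimpleGraph V) (s : Set V) : Prop :=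
  IsTwoConnected (G.induce s) ∨ ∃ a b, G.Adj a b ∧ s = {a, b}

/-- A block of `G`: a maximal vertex set inducing a 2-connected subgraph or an edge. -/
def IsBlock {V : Type*} (G : SimpleGraph V) (s : Set V) : Prop :=
  IsBlockSet G s ∧ ∀ t : Set V, IsBlockSet G t → s ⊆ t → s = t

/-- A cactus (block graph): a connected graph all of whose blocks are complete graphs. -/
def IsCactus {V : Type*} (G : SimpleGraph V) : Prop :=
  G.Connected ∧ ∀ s : Set V, IsBlock G s → s.Pairwise G.Adj

/-! ### Block sets -/

/-- Two-connectedness of an induced subgraph, with vertex deletion expressed in the ambient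
vertex type rather than in the subtype. -/
lemma isTwoConnected_induce_iff {V : Type*} (G : SimpleGraph V) (t : Set V) :
    IsTwoConnected (G.induce t) ↔
      3 ≤ t.ncard ∧ ∀ v ∈ t, (G.induce (t \ {v})).Connected := by
  unfold IsTwoConnected
  rw [Nat.card_coe_set_eq]
  refine and_congr_right fun _ => ?_
  rw [Subtype.forall]
  refine forall₂_congr fun v hv => ?_
  refine Iso.connected_iff ?_
  exact
    { toFun := fun x => ⟨x.1.1, x.1.2, fun h => x.2 (Subtype.ext h)⟩
      invFun := fun x => ⟨⟨x.1, x.2.1⟩, fun h => x.2.2 (congrArg Subtype.val h)⟩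
      left_inv := fun _ => rfl
      right_inv := fun _ => rfl
      map_rel_iff' := Iff.rfl }

lemma ncard_support_of_isCycle {V : Type*} {G : SimpleGraph V} {u : V} {w : G.Walk u u}
    (hw : w.IsCycle) : {x | x ∈ w.support}.ncard = w.length := by
  classical
  have h1 : {x | x ∈ w.support} = (w.support.tail.toFinset : Set V) := by
    ext x
    have := Walk.end_mem_tail_support hw.not_nil
    have h2 := w.cons_tail_support
    simp only [Set.mem_ofPred_eq, List.coe_toFinset]
    rw [← h2]
    grind
  rw [h1, Set.ncard_coe_finset, List.toFinset_card_of_nodup hw.support_nodup]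
  simp

/-- The vertices of a cycle form a block set: deleting a vertex from a cycle leaves a path. -/
lemma isBlockSet_support_of_isCycle {V : Type*} {G : SimpleGraph V} {u : V} {w : G.Walk u u}
    (hw : w.IsCycle) : IsBlockSet G {x | x ∈ w.support} := by
  classical
  left
  rw [isTwoConnected_induce_iff, ncard_support_of_isCycle hw]
  refine ⟨hw.three_le_length, fun v hv => ?_⟩
  have hc := hw.rotate hv
  have hmem : ∀ x, x ∈ (w.rotate v hv).support ↔ x ∈ w.support :=
    fun x => w.mem_support_rotate_iff v hv
  generalize w.rotate v hv = c at hc hmem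
  cases c with
  | nil => exact absurd hc (by simp)
  | cons h p =>
    rw [Walk.cons_isCycle_iff] at hc
    have hp : ¬ p.Nil := fun hn => h.ne (hn.eq).symm
    have hs := Walk.support_dropLast_concat hp
    have hnd := hc.1.support_nodup
    rw [← hs] at hnd
    have : {x | x ∈ w.support} \ {v} = {x | x ∈ p.dropLast.support} := by
      ext x
      simp only [Set.mem_sdiff, Set.mem_ofPred_eq, Set.mem_singleton_iff]
      rw [← hmem x, Walk.support_cons, ← hs]
      grind
    rw [this]
    exact p.dropLast.connected_induce_support

lemma exists_isBlock_of_isBlockSet {V : Type*} [Finite V] {G : SimpleGraph V} {t : Set V}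
    (ht : IsBlockSet G t) : ∃ b, IsBlock G b ∧ t ⊆ b := by
  obtain ⟨b, hb, hmax⟩ := Finite.exists_le_maximal ht
  exact ⟨b, ⟨hmax.1, fun c hc hbc => Set.Subset.antisymm hbc (hmax.2 hc hbc)⟩, hb⟩

lemma two_le_ncard_of_isBlockSet {V : Type*} {G : SimpleGraph V} {t : Set V}
    (ht : IsBlockSet G t) : 2 ≤ t.ncard := by
  rcases ht with ht | ⟨a, b, hab, rfl⟩
  · exact le_trans (by norm_num) ((isTwoConnected_induce_iff G t).1 ht).1
  · rw [Set.ncard_pair hab.ne]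

lemma isBlockSet_pair {V : Type*} {G : SimpleGraph V} {a b : V} (h : G.Adj a b) :
    IsBlockSet G {a, b} := Or.inr ⟨a, b, h, rfl⟩

/-- In a cactus every edge lies in only one block: the union of two cliques sharing two vertices
is a block set, as deleting one vertex leaves a common neighbour of all the others. -/
lemma IsCactus.block_unique {V : Type*} [Finite V] {G : SimpleGraph V} (hG : IsCactus G)
    {s t : Set V} (hs : IsBlock G s) (ht : IsBlock G t) {a b : V} (hab : a ≠ b)
    (has : a ∈ s) (hbs : b ∈ s) (hat : a ∈ t) (hbt : b ∈ t) : s = t := by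
  have hcs := hG.2 s hs
  have hct := hG.2 t ht
  have key : IsBlockSet G (s ∪ t) := by
    by_cases h3 : 3 ≤ (s ∪ t).ncard
    · left
      rw [isTwoConnected_induce_iff]
      refine ⟨h3, fun v hv => ?_⟩
      obtain ⟨z, hzv, hzs, hzt⟩ : ∃ z, z ≠ v ∧ z ∈ s ∧ z ∈ t := by
        by_cases h : a = v
        · exact ⟨b, fun h' => hab (h.trans h'.symm), hbs, hbt⟩
        · exact ⟨a, h, has, hat⟩
      rw [connected_iff_exists_forall_reachable]
      refine ⟨⟨z, Or.inl hzs, hzv⟩, fun x => ?_⟩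
      by_cases hx : z = x.1
      · have : (⟨z, Or.inl hzs, hzv⟩ : ((s ∪ t) \ {v} : Set V)) = x := Subtype.ext hx
        rw [this]
      · refine Adj.reachable ?_
        change G.Adj z x.1
        rcases x.2.1 with h | h
        · exact hcs hzs h hx
        · exact hct hzt h hx
    · have hsub : ({a, b} : Set V) ⊆ s ∪ t := by
        rintro x (rfl | rfl)
        · exact Or.inl has
        · exact Or.inl hbs
      have : ({a, b} : Set V) = s ∪ t := by
        refine Set.eq_of_subset_of_ncard_le hsub ?_ (Set.toFinite _)
        rw [Set.ncard_pair hab]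
        omega
      rw [← this]
      exact isBlockSet_pair (hcs has hbs hab)
  exact (hs.2 _ key Set.subset_union_left).trans (ht.2 _ key Set.subset_union_right).symm

lemma containsCycleLength_of_clique {V : Type*} [Finite V] {G : SimpleGraph V} {t : Set V}
    (ht : t.Pairwise G.Adj) {L : ℕ} (hL : 3 ≤ L) (hc : L ≤ t.ncard) :
    ContainsCycleLength G L := by
  refine (cycleGraph_isContained_iff (G := G) (n := L) (by omega)).1 ?_
  have : Fintype t := Fintype.ofFinite t
  obtain ⟨f⟩ : Nonempty (Fin L ↪ t) :=
    Function.Embedding.nonempty_of_card_le (by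
      rw [Fintype.card_fin, ← Nat.card_eq_fintype_card, Nat.card_coe_set_eq]; exact hc)
  have hinj : Function.Injective fun i => (f i : V) := Subtype.val_injective.comp f.injective
  exact ⟨⟨⟨fun i => f i, fun {i j} h => ht (f i).2 (f j).2 (hinj.ne h.ne)⟩, hinj⟩⟩

/-! ### Counting edges along a clique decomposition -/

/-- If the edges of `G` are partitioned by a family of cliques, the edge count is the sum of the
binomials of the clique sizes. -/
lemma edgeCount_eq_sum {V ι : Type*} [DecidableEq V] {G : SimpleGraph V}
    (I : Finset ι) (B : ι → Finset V)
    (hadj : ∀ a b, G.Adj a b ↔ a ≠ b ∧ ∃ i ∈ I, a ∈ B i ∧ b ∈ B i)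
    (huniq : ∀ i ∈ I, ∀ j ∈ I, ∀ a b, a ≠ b → a ∈ B i → b ∈ B i → a ∈ B j → b ∈ B j → i = j) :
    edgeCount G = ∑ i ∈ I, (B i).card.choose 2 := by
  classical
  have h : G.edgeSet =
      ((I.biUnion fun i => (B i).offDiag.image Sym2.mk.uncurry : Finset (Sym2 V)) :
        Set (Sym2 V)) := by
    ext e
    induction e using Sym2.ind with
    | _ a b =>
      simp only [mem_edgeSet, hadj, Finset.coe_biUnion, Set.mem_iUnion, Finset.mem_coe,
        Finset.mem_image, Finset.mem_offDiag, Prod.exists, Function.uncurry, Sym2.eq_iff]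
      constructor
      · rintro ⟨hne, i, hi, ha, hb⟩
        exact ⟨i, hi, a, b, ⟨ha, hb, hne⟩, Or.inl ⟨rfl, rfl⟩⟩
      · rintro ⟨i, hi, x, y, ⟨hx, hy, hne⟩, ⟨rfl, rfl⟩ | ⟨rfl, rfl⟩⟩
        · exact ⟨hne, i, hi, hx, hy⟩
        · exact ⟨hne.symm, i, hi, hy, hx⟩
  rw [edgeCount, h, Set.ncard_coe_finset, Finset.card_biUnion]
  · exact Finset.sum_congr rfl fun i _ => Sym2.card_image_offDiag _
  · intro i hi j hj hij
    rw [Function.onFun, Finset.disjoint_left]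
    intro e
    induction e using Sym2.ind with
    | _ a b =>
      simp only [Finset.mem_image, Finset.mem_offDiag, Prod.exists, Function.uncurry, Sym2.eq_iff]
      rintro ⟨x, y, ⟨hx, hy, hne⟩, h1⟩ ⟨x', y', ⟨hx', hy', -⟩, h2⟩
      refine hij (huniq i hi j hj x y hne hx hy ?_ ?_) <;> grind

open Classical in
/-- The blocks of a graph, as a finite family of finite vertex sets. -/
noncomputable def blockFinset {V : Type*} [Fintype V] (G : SimpleGraph V) : Finset (Finset V) :=
  Finset.univ.filter fun b => IsBlock G (b : Set V)

lemma mem_blockFinset {V : Type*} [Fintype V] {G : SimpleGraph V} {b : Finset V} :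
    b ∈ blockFinset G ↔ IsBlock G (b : Set V) := by
  simp [blockFinset]

lemma IsCactus.blockFinset_unique {V : Type*} [Fintype V] {G : SimpleGraph V} (hG : IsCactus G)
    {s t : Finset V} (hs : s ∈ blockFinset G) (ht : t ∈ blockFinset G) {a b : V} (hab : a ≠ b)
    (has : a ∈ s) (hbs : b ∈ s) (hat : a ∈ t) (hbt : b ∈ t) : s = t :=
  Finset.coe_injective
    (hG.block_unique (mem_blockFinset.1 hs) (mem_blockFinset.1 ht) hab has hbs hat hbt)

lemma exists_mem_blockFinset {V : Type*} [Fintype V] {G : SimpleGraph V} {t : Set V}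
    (ht : IsBlockSet G t) : ∃ b ∈ blockFinset G, t ⊆ b := by
  classical
  obtain ⟨b, hb, htb⟩ := exists_isBlock_of_isBlockSet ht
  exact ⟨b.toFinset, mem_blockFinset.2 (by simpa using hb), by simpa using htb⟩

lemma two_le_card_of_mem_blockFinset {V : Type*} [Fintype V] {G : SimpleGraph V} {b : Finset V}
    (hb : b ∈ blockFinset G) : 2 ≤ b.card := by
  simpa using two_le_ncard_of_isBlockSet (mem_blockFinset.1 hb).1

lemma IsCactus.edgeCount_eq {V : Type*} [Fintype V] {G : SimpleGraph V} (hG : IsCactus G) :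
    edgeCount G = ∑ b ∈ blockFinset G, b.card.choose 2 := by
  classical
  refine edgeCount_eq_sum (blockFinset G) id (fun a b => ⟨fun h => ⟨h.ne, ?_⟩, ?_⟩) ?_
  · obtain ⟨t, ht, hab⟩ := exists_mem_blockFinset (isBlockSet_pair h)
    exact ⟨t, ht, hab (by simp), hab (by simp)⟩
  · rintro ⟨hne, t, ht, ha, hb⟩
    exact hG.2 _ (mem_blockFinset.1 ht) ha hb hne
  · exact fun s hs t ht a b hab h1 h2 h3 h4 => hG.blockFinset_unique hs ht hab h1 h2 h3 h4

/-- The block sizes satisfy `∑ (|B| - 1) ≤ |V| - 1`: replacing each block by a spanning star gives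
a subgraph with `∑ (|B| - 1)` edges, which is acyclic because every cycle of `G` lies in a single
block. -/
lemma IsCactus.sum_card_sub_one_lt {V : Type*} [Fintype V] {G : SimpleGraph V}
    (hG : IsCactus G) : ∑ b ∈ blockFinset G, (b.card - 1) + 1 ≤ Fintype.card V := by
  classical
  have hne : ∀ b : Finset V, ∃ c : V, b ∈ blockFinset G → c ∈ b := by
    intro b
    by_cases hb : b ∈ blockFinset G
    · have h2 := two_le_card_of_mem_blockFinset hb
      obtain ⟨c, hc⟩ := Finset.card_pos.1 (by omega : 0 < b.card)
      exact ⟨c, fun _ => hc⟩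
    · exact ⟨hG.1.nonempty.some, fun h => absurd h hb⟩
  choose c hc using hne
  let H : SimpleGraph V :=
    { Adj := fun x y => x ≠ y ∧ ∃ b ∈ blockFinset G, x ∈ b ∧ y ∈ b ∧ (x = c b ∨ y = c b)
      symm := ⟨fun x y h => ⟨h.1.symm, h.2.imp fun b hb => ⟨hb.1, hb.2.2.1, hb.2.1, hb.2.2.2.symm⟩⟩⟩
      loopless := ⟨fun x h => h.1 rfl⟩ }
  have hHG : H ≤ G := by
    rintro x y ⟨hxy, b, hb, hx, hy, -⟩
    exact hG.2 _ (mem_blockFinset.1 hb) hx hy hxy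
  have hacyc : H.IsAcyclic := by
    intro u w hw
    obtain ⟨b, hb, hsub⟩ := exists_mem_blockFinset (isBlockSet_support_of_isCycle (hw.mapLe hHG))
    have hsub' : ∀ x ∈ w.support, x ∈ b := fun x hx => hsub (by simpa using hx)
    -- A vertex of the cycle other than the centre would have the centre as its only neighbour.
    obtain ⟨x, hx, hxc⟩ : ∃ x ∈ w.support, x ≠ c b := by
      have h3 := hw.three_le_length
      rw [← ncard_support_of_isCycle hw] at h3
      obtain ⟨x, hx, hxc⟩ := Set.exists_ne_of_one_lt_ncard (s := {x | x ∈ w.support}) (by omega) (c b)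
      exact ⟨x, hx, hxc⟩
    have h2 := hw.ncard_neighborSet_toSubgraph_eq_two hx
    have hss : w.toSubgraph.neighborSet x ⊆ {c b} := by
      intro y hy
      have hyw : y ∈ w.support := w.mem_verts_toSubgraph.1 (w.toSubgraph.edge_vert hy.symm)
      obtain ⟨hxy, b', hb', hx', hy', h⟩ := w.toSubgraph.adj_sub hy
      obtain rfl := hG.blockFinset_unique hb' hb hxy hx' hy' (hsub' x hx) (hsub' y hyw)
      exact h.resolve_left hxc
    have := Set.ncard_le_ncard hss (Set.toFinite _)
    rw [Set.ncard_singleton] at this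
    omega
  obtain ⟨F, hHF, -, hF⟩ := hG.1.exists_isTree_le_of_le_of_isAcyclic hHG hacyc
  rw [← hF.card_edgeFinset]
  refine Nat.succ_le_succ ?_
  have hsum : ∑ b ∈ blockFinset G, (b.card - 1) =
      ((blockFinset G).biUnion fun b => (b.erase (c b)).image fun x => s(c b, x)).card := by
    rw [Finset.card_biUnion]
    · refine Finset.sum_congr rfl fun b hb => ?_
      rw [Finset.card_image_of_injective, Finset.card_erase_of_mem (hc b hb)]
      intro x y hxy
      exact Sym2.congr_right.1 hxy
    · intro b hb b' hb' hbb
      rw [Function.onFun, Finset.disjoint_left]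
      simp only [Finset.mem_image, Finset.mem_erase]
      rintro e ⟨x, ⟨hxc, hx⟩, rfl⟩ ⟨y, ⟨hyc, hy⟩, h⟩
      have h1 := hc b hb
      have h2 := hc b' hb'
      rw [Sym2.eq_iff] at h
      refine hbb (hG.blockFinset_unique hb hb' hxc hx h1 ?_ ?_) <;> grind
  rw [hsum]
  refine Finset.card_le_card fun e he => ?_
  simp only [Finset.mem_biUnion, Finset.mem_image, Finset.mem_erase] at he
  obtain ⟨b, hb, x, ⟨hxc, hx⟩, rfl⟩ := he
  rw [mem_edgeFinset, mem_edgeSet]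
  exact hHF ⟨hxc.symm, b, hb, hc b hb, hx, Or.inl rfl⟩

/-! ### The optimization over block sizes -/

/-- Splitting a part of size `a` off a budget `q * m + ρ` leaves a budget `q' * m + ρ'`, and the
convex weight `x * (x + 1)` does not increase in total. Equality forces the part to be full, or to
be exactly the remainder. -/
lemma split_budget {m q ρ a S : ℕ} (hρ : ρ ≤ m) (ha1 : 1 ≤ a) (ha : a ≤ m)
    (h : a + S ≤ q * m + ρ) :
    ∃ q' ρ', ρ' ≤ m ∧ S ≤ q' * m + ρ' ∧
      a * (a + 1) + (q' * (m * (m + 1)) + ρ' * (ρ' + 1)) ≤ q * (m * (m + 1)) + ρ * (ρ + 1) ∧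
      (a * (a + 1) + (q' * (m * (m + 1)) + ρ' * (ρ' + 1)) = q * (m * (m + 1)) + ρ * (ρ + 1) →
        a = m ∨ (a = ρ ∧ ρ' = 0)) := by
  rcases le_or_gt a ρ with haρ | haρ
  · obtain ⟨b, rfl⟩ := Nat.exists_eq_add_of_le haρ
    refine ⟨q, b, by omega, by omega, ?_, fun he => ?_⟩
    · nlinarith [Nat.zero_le (a * b)]
    · have : a * b = 0 := by nlinarith
      rcases Nat.mul_eq_zero.1 this with h0 | h0
      · omega
      · right; omega
  · have hq : q ≠ 0 := by
      rintro rfl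
      omega
    obtain ⟨p, rfl⟩ := Nat.exists_eq_succ_of_ne_zero hq
    obtain ⟨d, rfl⟩ := Nat.exists_eq_add_of_le haρ.le
    obtain ⟨f, rfl⟩ := Nat.exists_eq_add_of_le ha
    refine ⟨p, ρ + f, by omega, ?_, ?_, fun he => ?_⟩
    · rw [Nat.succ_mul] at h
      omega
    · rw [Nat.succ_mul]
      nlinarith [Nat.zero_le (d * f)]
    · rw [Nat.succ_mul] at he
      have : d * f = 0 := by nlinarith
      rcases Nat.mul_eq_zero.1 this with h0 | h0
      · omega
      · left; omega

lemma sum_weight_le {ι : Type*} {m : ℕ} (I : Finset ι) (x : ι → ℕ)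
    (hx : ∀ i ∈ I, 1 ≤ x i ∧ x i ≤ m) (q ρ : ℕ) (hρ : ρ ≤ m) (h : ∑ i ∈ I, x i ≤ q * m + ρ) :
    ∑ i ∈ I, x i * (x i + 1) ≤ q * (m * (m + 1)) + ρ * (ρ + 1) := by
  classical
  induction I using Finset.induction_on generalizing q ρ with
  | empty => simp
  | insert i I hi ih =>
    rw [Finset.sum_insert hi] at h ⊢
    have hxi := hx i (Finset.mem_insert_self i I)
    obtain ⟨q', ρ', h1, h2, h3, -⟩ := split_budget hρ hxi.1 hxi.2 h
    have := ih (fun j hj => hx j (Finset.mem_insert_of_mem hj)) q' ρ' h1 h2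
    omega

/-- In the equality case at most one part is not full: a first such part must be the whole
remainder `ρ`, and then the remaining budget is a multiple of `m`, which leaves no room for a
second one. -/
lemma sum_weight_eq {ι : Type*} {m : ℕ} (I : Finset ι) (x : ι → ℕ)
    (hx : ∀ i ∈ I, 1 ≤ x i ∧ x i ≤ m) (q ρ : ℕ) (hρ : ρ ≤ m) (h : ∑ i ∈ I, x i ≤ q * m + ρ)
    (he : ∑ i ∈ I, x i * (x i + 1) = q * (m * (m + 1)) + ρ * (ρ + 1))
    {i j : ι} (hi : i ∈ I) (hj : j ∈ I) (hxi : x i ≠ m) (hxj : x j ≠ m) : i = j := by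
  classical
  by_contra hij
  rw [← Finset.add_sum_erase I _ hi] at h he
  obtain ⟨q', ρ', h1, h2, h3, h4⟩ := split_budget hρ (hx i hi).1 (hx i hi).2 h
  have hx' : ∀ l ∈ I.erase i, 1 ≤ x l ∧ x l ≤ m := fun l hl => hx l (Finset.mem_of_mem_erase hl)
  have h5 := sum_weight_le _ x hx' q' ρ' h1 h2
  obtain ⟨-, rfl⟩ := (h4 (by omega)).resolve_left hxi
  have he' : ∑ i ∈ I.erase i, x i * (x i + 1) = q' * (m * (m + 1)) + 0 * (0 + 1) := by omega
  have hj' : j ∈ I.erase i := Finset.mem_erase.2 ⟨Ne.symm hij, hj⟩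
  rw [← Finset.add_sum_erase _ _ hj'] at h2 he'
  obtain ⟨q'', ρ'', g1, g2, g3, g4⟩ := split_budget (Nat.zero_le m) (hx j hj).1 (hx j hj).2 h2
  have g5 := sum_weight_le ((I.erase i).erase j) x
    (fun l hl => hx' l (Finset.mem_of_mem_erase hl)) q'' ρ'' g1 g2
  have := (g4 (by omega)).resolve_left hxj
  have := (hx j hj).1
  omega

lemma two_mul_choose_two (a : ℕ) : 2 * a.choose 2 = (a - 1) * (a - 1 + 1) := by
  rw [Nat.choose_two_right, Nat.mul_div_cancel' (Nat.even_mul_pred_self a).two_dvd]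
  cases a with
  | zero => rfl
  | succ a => simp [mul_comm]

/-! ### The extremal windmill -/

/-- The `i`-th leaf of the windmill on `{0, …, n - 1}`: the hub `0` and the `i`-th run of `m`
consecutive nonzero vertices. The hub lies in every leaf, and since `0 - 1 = 0` in `ℕ` every
vertex `v` lies in the leaf of index `(v - 1) / m`. -/
def leaf (m n i : ℕ) : Finset (Fin n) :=
  Finset.univ.filter fun v => v.val = 0 ∨ (v.val - 1) / m = i

/-- The windmill graph: complete graphs on the leaves, glued at the hub `0`. -/
def windmill (m n t : ℕ) : SimpleGraph (Fin n) where
  Adj u v := u ≠ v ∧ ∃ i ∈ Finset.range (t + 1), u ∈ leaf m n i ∧ v ∈ leaf m n i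
  symm := ⟨fun _ _ h => ⟨h.1.symm, h.2.imp fun _ hi => ⟨hi.1, hi.2.2, hi.2.1⟩⟩⟩
  loopless := ⟨fun _ h => h.1 rfl⟩

lemma mem_leaf {m n i : ℕ} {v : Fin n} :
    v ∈ leaf m n i ↔ v.val = 0 ∨ (v.val - 1) / m = i := by
  simp [leaf]

lemma div_lt_of_fin {m n t r : ℕ} (hm : 1 ≤ m) (hr : r ≤ m + 1) (hn : n = t * m + r)
    (v : Fin n) : (v.val - 1) / m < t + 1 := by
  rw [Nat.div_lt_iff_lt_mul hm, Nat.succ_mul]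
  have := v.2
  omega

lemma windmill_adj_of_div_eq {m n t r : ℕ} (hm : 1 ≤ m) (hr : r ≤ m + 1) (hn : n = t * m + r)
    {u v : Fin n} (huv : u ≠ v)
    (h : u.val = 0 ∨ v.val = 0 ∨ (u.val - 1) / m = (v.val - 1) / m) :
    (windmill m n t).Adj u v := by
  refine ⟨huv, ?_⟩
  by_cases hv : v.val = 0
  · exact ⟨_, Finset.mem_range.2 (div_lt_of_fin hm hr hn u), mem_leaf.2 (Or.inr rfl),
      mem_leaf.2 (Or.inl hv)⟩
  · refine ⟨_, Finset.mem_range.2 (div_lt_of_fin hm hr hn v), mem_leaf.2 ?_,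
      mem_leaf.2 (Or.inr rfl)⟩
    rcases h with h | h | h
    · exact Or.inl h
    · exact absurd h hv
    · exact Or.inr h

/-- A connected vertex set avoiding the hub stays inside one leaf. -/
lemma windmill_div_eq_of_connected {m n t : ℕ} {W : Set (Fin n)}
    (h0 : ∀ v ∈ W, v.val ≠ 0) (hW : ((windmill m n t).induce W).Connected)
    {x y : Fin n} (hx : x ∈ W) (hy : y ∈ W) : (x.val - 1) / m = (y.val - 1) / m := by
  have key : ∀ (a b : W), ((windmill m n t).induce W).Walk a b →
      (a.1.val - 1) / m = (b.1.val - 1) / m := by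
    intro a b p
    induction p with
    | nil => rfl
    | @cons a b c h p ih =>
      rw [← ih]
      obtain ⟨-, i, -, ha, hb⟩ : (windmill m n t).Adj a.1 b.1 := h
      rw [(mem_leaf.1 ha).resolve_left (h0 _ a.2), (mem_leaf.1 hb).resolve_left (h0 _ b.2)]
  obtain ⟨p⟩ := hW.preconnected ⟨x, hx⟩ ⟨y, hy⟩
  exact key _ _ p

/-- Any two vertices of a block set lie in a common leaf. -/
lemma windmill_div_eq_of_isBlockSet {m n t : ℕ} {T : Set (Fin n)}
    (hT : IsBlockSet (windmill m n t) T) {x y : Fin n} (hx : x ∈ T) (hy : y ∈ T)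
    (hx0 : x.val ≠ 0) (hy0 : y.val ≠ 0) : (x.val - 1) / m = (y.val - 1) / m := by
  by_cases hxy : x = y
  · rw [hxy]
  rcases hT with hT | ⟨a, b, ⟨-, i, -, ha, hb⟩, rfl⟩
  · rw [isTwoConnected_induce_iff] at hT
    -- Delete the hub if it is present, and any third vertex otherwise.
    obtain ⟨v, hv, hvx, hvy, hv0⟩ : ∃ v ∈ T, v ≠ x ∧ v ≠ y ∧ ∀ u ∈ T \ {v}, u.val ≠ 0 := by
      by_cases hz : ∃ z ∈ T, z.val = 0
      · obtain ⟨z, hzT, hz⟩ := hz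
        refine ⟨z, hzT, fun h => hx0 (h ▸ hz), fun h => hy0 (h ▸ hz), fun u hu h => hu.2 ?_⟩
        exact Fin.ext (h.trans hz.symm)
      · push Not at hz
        have h2 : ({x, y} : Set (Fin n)).ncard < T.ncard := by
          rw [Set.ncard_pair hxy]
          omega
        obtain ⟨v, hv, hv'⟩ := Set.exists_mem_notMem_of_ncard_lt_ncard h2
        exact ⟨v, hv, fun h => hv' (by simp [h]), fun h => hv' (by simp [h]),
          fun u hu => hz u hu.1⟩
    exact windmill_div_eq_of_connected hv0 (hT.2 v hv) ⟨hx, hvx.symm⟩ ⟨hy, hvy.symm⟩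
  · have key : ∀ z ∈ ({a, b} : Set (Fin n)), z.val ≠ 0 → (z.val - 1) / m = i := by
      rintro z (rfl | rfl) hz
      · exact (mem_leaf.1 ha).resolve_left hz
      · exact (mem_leaf.1 hb).resolve_left hz
    rw [key x hx hx0, key y hy hy0]

lemma windmill_isCactus {m n t r : ℕ} (hm : 1 ≤ m) (hr2 : 2 ≤ r) (hr : r ≤ m + 1)
    (hn : n = t * m + r) : IsCactus (windmill m n t) := by
  constructor
  · rw [connected_iff_exists_forall_reachable]
    refine ⟨⟨0, by omega⟩, fun v => ?_⟩
    by_cases hv : (⟨0, by omega⟩ : Fin n) = v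
    · rw [hv]
    · exact (windmill_adj_of_div_eq hm hr hn hv (Or.inl rfl)).reachable
  · intro T hT x hx y hy hxy
    refine windmill_adj_of_div_eq hm hr hn hxy ?_
    by_cases hx0 : x.val = 0
    · exact Or.inl hx0
    by_cases hy0 : y.val = 0
    · exact Or.inr (Or.inl hy0)
    exact Or.inr (Or.inr (windmill_div_eq_of_isBlockSet hT.1 hx hy hx0 hy0))

/-- The truncated subtraction makes this hold for leaf indices beyond the last vertex too: such a
leaf is just the hub. -/
lemma card_leaf {m n i : ℕ} (hm : 1 ≤ m) (hn : 1 ≤ n) :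
    (leaf m n i).card = min (i * m + m) (n - 1) - i * m + 1 := by
  have h : (leaf m n i).map Fin.valEmbedding =
      insert 0 (Finset.Ioc (i * m) (min (i * m + m) (n - 1))) := by
    ext v
    simp only [Finset.mem_map, mem_leaf, Fin.valEmbedding_apply, Finset.mem_insert,
      Finset.mem_Ioc, le_min_iff]
    have hdiv : v ≠ 0 → ((v - 1) / m = i ↔ i * m < v ∧ v ≤ i * m + m) := by
      intro hv
      rw [Nat.div_eq_iff hm]
      omega
    constructor
    · rintro ⟨u, hu, rfl⟩
      have := u.2
      by_cases h0 : u.val = 0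
      · exact Or.inl h0
      · have := (hdiv h0).1 (hu.resolve_left h0)
        omega
    · intro hv
      refine ⟨⟨v, by omega⟩, ?_, rfl⟩
      by_cases h0 : v = 0
      · exact Or.inl h0
      · have := hv.resolve_left h0
        exact Or.inr ((hdiv h0).2 ⟨this.1, this.2.1⟩)
  rw [← Finset.card_map Fin.valEmbedding, h, Finset.card_insert_of_notMem (by simp),
    Nat.card_Ioc]

lemma card_leaf_le {m n t r i : ℕ} (hm : 1 ≤ m) (hr2 : 2 ≤ r) (hn : n = t * m + r)
    (hi : i < t + 1) : (leaf m n i).card ≤ m + 1 := by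
  have := Nat.mul_le_mul_right m (Nat.lt_succ_iff.1 hi)
  rw [card_leaf hm (by omega)]
  omega

lemma edgeCount_windmill {m n t r : ℕ} (hm : 1 ≤ m) (hr2 : 2 ≤ r) (hr : r ≤ m + 1)
    (hn : n = t * m + r) :
    edgeCount (windmill m n t) = t * (m + 1).choose 2 + r.choose 2 := by
  rw [edgeCount_eq_sum (Finset.range (t + 1)) (leaf m n) (fun _ _ => Iff.rfl), Finset.sum_range_succ]
  · congr 1
    · rw [Finset.sum_congr rfl (g := fun _ => (m + 1).choose 2), Finset.sum_const,
        Finset.card_range, smul_eq_mul]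
      intro i hi
      have := Nat.mul_le_mul_right m (Nat.succ_le_of_lt (Finset.mem_range.1 hi))
      rw [Nat.succ_mul] at this
      rw [card_leaf hm (by omega)]
      congr 1
      omega
    · rw [card_leaf hm (by omega)]
      congr 1
      omega
  · intro i _ j _ a b hab hai hbi haj hbj
    rw [mem_leaf] at hai hbi haj hbj
    have : ¬ (a.val = 0 ∧ b.val = 0) := fun h => hab (Fin.ext (h.1.trans h.2.symm))
    omega

lemma windmill_not_containsCycleLength {m n t r : ℕ} (hm : 1 ≤ m) (hr2 : 2 ≤ r)
    (hr : r ≤ m + 1) (hn : n = t * m + r) :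
    ¬ ContainsCycleLength (windmill m n t) (m + 2) := by
  rintro ⟨u, w, hw, hlen⟩
  have hT := isBlockSet_support_of_isCycle hw
  have hcard := ncard_support_of_isCycle hw
  obtain ⟨x, hx, hx0⟩ := Set.exists_ne_of_one_lt_ncard (s := {x | x ∈ w.support})
    (by omega) (⟨0, by omega⟩ : Fin n)
  have hx0' : x.val ≠ 0 := fun h => hx0 (Fin.ext h)
  have hsub : {x | x ∈ w.support} ⊆ (leaf m n ((x.val - 1) / m) : Set (Fin n)) := by
    intro y hy
    rw [Finset.mem_coe, mem_leaf]
    by_cases hy0 : y.val = 0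
    · exact Or.inl hy0
    · exact Or.inr (windmill_div_eq_of_isBlockSet hT hy hx hy0 hx0')
  have h1 := Set.ncard_le_ncard hsub (Set.toFinite _)
  rw [Set.ncard_coe_finset] at h1
  have h2 := card_leaf_le hm hr2 hn (div_lt_of_fin hm hr hn x)
  omega

/-- For `k ≥ 2` and `n = (s-1)(2k-1) + r` with `s ≥ 1`, `2 ≤ r ≤ 2k`, the maximum number of
edges of an `n`-vertex cactus containing no cycle of length `2k+1` equals
`g(n,k) = (s-1)·C(2k,2) + C(r,2)`; moreover the maximum is attained only by cacti all of
whose blocks have exactly `2k` vertices, with at most one exceptional smaller block. -/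
theorem cactus_max (k n s r : ℕ) (hk : 2 ≤ k) (hn : 2 ≤ n) (hs : 1 ≤ s)
    (hr2 : 2 ≤ r) (hr : r ≤ 2 * k) (hrep : n = (s - 1) * (2 * k - 1) + r) :
    (∀ G : SimpleGraph (Fin n), IsCactus G → ¬ ContainsCycleLength G (2 * k + 1) →
      edgeCount G ≤ (s - 1) * Nat.choose (2 * k) 2 + Nat.choose r 2) ∧
    (∃ G : SimpleGraph (Fin n), IsCactus G ∧ ¬ ContainsCycleLength G (2 * k + 1) ∧
      edgeCount G = (s - 1) * Nat.choose (2 * k) 2 + Nat.choose r 2) ∧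
    (∀ G : SimpleGraph (Fin n), IsCactus G → ¬ ContainsCycleLength G (2 * k + 1) →
      edgeCount G = (s - 1) * Nat.choose (2 * k) 2 + Nat.choose r 2 →
        (∀ t : Set (Fin n), IsBlock G t → t.ncard ≤ 2 * k) ∧
        {t : Set (Fin n) | IsBlock G t ∧ t.ncard ≠ 2 * k}.Subsingleton) := by
  -- `m` is the largest number of vertices a block may add to the ones before it.
  obtain ⟨m, hm⟩ : ∃ m, 2 * k = m + 1 := ⟨2 * k - 1, by omega⟩
  obtain ⟨t, rfl⟩ : ∃ t, s = t + 1 := ⟨s - 1, by omega⟩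
  simp only [hm, Nat.add_sub_cancel] at hrep hr ⊢
  have hm1 : 1 ≤ m := by omega
  have hblock : ∀ G : SimpleGraph (Fin n), IsCactus G → ¬ ContainsCycleLength G (m + 2) →
      ∀ b : Set (Fin n), IsBlock G b → b.ncard ≤ m + 1 := by
    intro G hG hC b hb
    by_contra hlt
    exact hC (containsCycleLength_of_clique (hG.2 b hb) (by omega) (by omega))
  have hx : ∀ G : SimpleGraph (Fin n), IsCactus G → ¬ ContainsCycleLength G (m + 2) →
      ∀ b ∈ blockFinset G, 1 ≤ b.card - 1 ∧ b.card - 1 ≤ m := by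
    intro G hG hC b hb
    have h1 := two_le_card_of_mem_blockFinset hb
    have h2 := hblock G hG hC _ (mem_blockFinset.1 hb)
    rw [Set.ncard_coe_finset] at h2
    omega
  have hsum : ∀ G : SimpleGraph (Fin n), IsCactus G →
      ∑ b ∈ blockFinset G, (b.card - 1) ≤ t * m + (r - 1) := by
    intro G hG
    have h := hG.sum_card_sub_one_lt
    rw [Fintype.card_fin] at h
    omega
  have hedge : ∀ G : SimpleGraph (Fin n), IsCactus G →
      2 * edgeCount G = ∑ b ∈ blockFinset G, (b.card - 1) * (b.card - 1 + 1) := by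
    intro G hG
    rw [hG.edgeCount_eq, Finset.mul_sum]
    exact Finset.sum_congr rfl fun b _ => two_mul_choose_two _
  have hval : 2 * (t * (m + 1).choose 2 + r.choose 2) =
      t * (m * (m + 1)) + (r - 1) * (r - 1 + 1) := by
    rw [Nat.mul_add, Nat.mul_left_comm, two_mul_choose_two, two_mul_choose_two, Nat.add_sub_cancel]
  refine ⟨fun G hG hC => ?_, ⟨windmill m n t, windmill_isCactus hm1 hr2 hr hrep,
    windmill_not_containsCycleLength hm1 hr2 hr hrep, edgeCount_windmill hm1 hr2 hr hrep⟩,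
    fun G hG hC he => ⟨hblock G hG hC, ?_⟩⟩
  · have := sum_weight_le _ _ (hx G hG hC) t (r - 1) (by omega) (hsum G hG)
    rw [← hedge G hG, ← hval] at this
    omega
  · classical
    rintro b ⟨hb, hbc⟩ b' ⟨hb', hbc'⟩
    have key := sum_weight_eq _ _ (hx G hG hC) t (r - 1) (by omega) (hsum G hG)
      (by rw [← hedge G hG, ← hval, he])
      (i := b.toFinset) (j := b'.toFinset)
      (mem_blockFinset.2 (by simpa using hb)) (mem_blockFinset.2 (by simpa using hb'))
      (by rw [← Set.ncard_eq_toFinset_card']; omega)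
      (by rw [← Set.ncard_eq_toFinset_card']; omega)
    exact Set.toFinset_inj.1 key
end

section
/- For every integer k ≥ 2: g(n,k) > ⌊n²/4⌋ for every integer n with 3 ≤ n ≤ 4k-3, and g(n,k) = ⌊n²/4⌋ for n ∈ {4k-2, 4k-1}, and g(n,k) < ⌊n²/4⌋ for every integer n ≥ 4k. -/
/-!
Write `m = 2k - 1`, `q = s - 1` and `n = q m + r` with `2 ≤ r ≤ m + 1`. Then
`4 g(n) = 2 q m (m + 1) + 2 r (r - 1)`, and the comparison with `⌊n² / 4⌋` is the comparison of
`4 g(n)` with `n²`, up to the rounding: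

* `q = 0`: `4 g(n) - n² = n (n - 2)`, which is positive for `n ≥ 3`;
* `q = 1`: `4 g(n) - n² = (m - r)² + 2 (m - r)`, which is positive for `r < m`, is `0` at `r = m`
  and `-1` at `r = m + 1` (and then rounding down gives equality);
* `q ≥ 2`: `n² - 4 g(n) = q (q - 2) m² + 2 q m (r - 1) - (r - 1)² + 1`, which is at least
  `3 (r - 1)² + 1 ≥ 4` because `1 ≤ r - 1 ≤ m`, so rounding down keeps the inequality strict.
-/

lemma two_mul_choose_succ_two (t : ℕ) : 2 * (t + 1).choose 2 = (t + 1) * t := by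
  have h := Nat.add_one_mul_choose_eq t 1
  rw [Nat.choose_one_right, one_add_one_eq_two] at h
  omega

/-- The closed form of `4 g(n)`, free of truncated subtraction: here `k = j + 1`, `m = 2 j + 1`,
`s = q + 1` and `r = t + 1`. -/
lemma four_mul_g (j : ℕ) (g : ℕ → ℕ)
    (hg : ∀ n s r : ℕ, 1 ≤ s → 2 ≤ r → r ≤ 2 * (j + 1) →
      n = (s - 1) * (2 * (j + 1) - 1) + r →
      g n = (s - 1) * Nat.choose (2 * (j + 1)) 2 + Nat.choose r 2)
    (q t : ℕ) (ht : 1 ≤ t) (htj : t ≤ 2 * j + 1) :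
    4 * g (q * (2 * j + 1) + (t + 1)) =
      2 * (q * ((2 * j + 2) * (2 * j + 1))) + 2 * ((t + 1) * t) := by
  have h := hg (q * (2 * j + 1) + (t + 1)) (q + 1) (t + 1) (by omega) (by omega) (by omega) rfl
  have h1 := two_mul_choose_succ_two (2 * j + 1)
  have h2 := two_mul_choose_succ_two t
  rw [h, ← h2, ← h1, Nat.add_sub_cancel, show 2 * (j + 1) = 2 * j + 1 + 1 by ring]
  ring


/-- For every integer `k ≥ 2`, with `g` defined by `g(n) = (s-1)·C(2k,2) + C(r,2)` whenever
`n = (s-1)(2k-1) + r` with `s ≥ 1`, `2 ≤ r ≤ 2k`, we have `g(n) > ⌊n²/4⌋` for `3 ≤ n ≤ 4k-3`,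
`g(n) = ⌊n²/4⌋` for `n ∈ {4k-2, 4k-1}`, and `g(n) < ⌊n²/4⌋` for `n ≥ 4k`. -/
theorem g_vs_turan (k : ℕ) (hk : 2 ≤ k) (g : ℕ → ℕ)
    (hg : ∀ n s r : ℕ, 1 ≤ s → 2 ≤ r → r ≤ 2 * k → n = (s - 1) * (2 * k - 1) + r →
      g n = (s - 1) * Nat.choose (2 * k) 2 + Nat.choose r 2) :
    (∀ n : ℕ, 3 ≤ n → n ≤ 4 * k - 3 → n ^ 2 / 4 < g n) ∧
    g (4 * k - 2) = (4 * k - 2) ^ 2 / 4 ∧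
    g (4 * k - 1) = (4 * k - 1) ^ 2 / 4 ∧
    (∀ n : ℕ, 4 * k ≤ n → g n < n ^ 2 / 4) := by
  obtain ⟨j, rfl⟩ : ∃ j, k = j + 1 := ⟨k - 1, by omega⟩
  have key := four_mul_g j g hg
  refine ⟨fun n h3 hn => ?_, ?_, ?_, fun n hn => ?_⟩
  · apply Nat.div_lt_of_lt_mul
    rcases le_or_gt n (2 * j + 2) with h | h
    · obtain ⟨t, rfl⟩ : ∃ t, n = t + 1 := ⟨n - 1, by omega⟩
      have e := key 0 t (by omega) (by omega)
      rw [zero_mul, zero_add] at e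
      rw [e]
      nlinarith
    · obtain ⟨t, rfl⟩ : ∃ t, n = 1 * (2 * j + 1) + (t + 1) := ⟨n - (2 * j + 2), by omega⟩
      rw [key 1 t (by omega) (by omega)]
      -- `d + 1` is `m - r`, so the difference is `(d + 1)² + 2 (d + 1)`.
      obtain ⟨d, hd⟩ : ∃ d, 2 * j = t + 1 + d := ⟨2 * j - (t + 1), by omega⟩
      rw [hd]
      nlinarith
  · have e := key 1 (2 * j) (by omega) (by omega)
    rw [show 4 * (j + 1) - 2 = 1 * (2 * j + 1) + (2 * j + 1) by omega]
    have e2 : (1 * (2 * j + 1) + (2 * j + 1)) ^ 2 =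
        2 * (1 * ((2 * j + 2) * (2 * j + 1))) + 2 * ((2 * j + 1) * (2 * j)) := by ring
    omega
  · have e := key 1 (2 * j + 1) (by omega) (by omega)
    rw [show 4 * (j + 1) - 1 = 1 * (2 * j + 1) + (2 * j + 1 + 1) by omega]
    have e2 : (1 * (2 * j + 1) + (2 * j + 1 + 1)) ^ 2 =
        2 * (1 * ((2 * j + 2) * (2 * j + 1))) + 2 * ((2 * j + 1 + 1) * (2 * j + 1)) + 1 := by
      ring
    omega
  · -- Dividing `n - 2` by `m` puts the remainder `r` in the range `2 ≤ r ≤ m + 1`;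
    -- `q ≥ 2` since `n - 2 ≥ 2 m`.
    obtain ⟨q, t, ht, htj, rfl⟩ : ∃ q t, 1 ≤ t ∧ t ≤ 2 * j + 1 ∧
        n = (q + 2) * (2 * j + 1) + (t + 1) := by
      refine ⟨(n - 4 * (j + 1)) / (2 * j + 1), (n - 4 * (j + 1)) % (2 * j + 1) + 1, by omega,
        Nat.mod_lt _ (by omega), ?_⟩
      have h := Nat.div_add_mod' (n - 4 * (j + 1)) (2 * j + 1)
      rw [add_mul]
      omega
    have e := key (q + 2) t ht htj
    suffices 4 * g ((q + 2) * (2 * j + 1) + (t + 1)) + 4 ≤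
        ((q + 2) * (2 * j + 1) + (t + 1)) ^ 2 by omega
    rw [e]
    obtain ⟨d, hd⟩ : ∃ d, 2 * j + 1 = t + d := ⟨2 * j + 1 - t, by omega⟩
    rw [show 2 * j + 2 = 2 * j + 1 + 1 by ring, hd]
    zify at ht ⊢
    have h1 : (0 : ℤ) ≤ (q + 2) * q * (t + d) ^ 2 := by positivity
    have h2 : (0 : ℤ) ≤ q * (t + d) * t := by positivity
    have h3 : (0 : ℤ) ≤ d * t := by positivity
    have h4 : (1 : ℤ) ≤ t ^ 2 := one_le_pow₀ ht
    linarith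
end

section
/- For all integers k ≥ 2 and n ≥ k, h₁(n,k) ≤ g(n,k), and equality holds if and only if n = (s-1)(2k-1) + r for some integer s ≥ 1 and some r ∈ {k, k+1}. -/
/-!
With `t = s - 1` and `n = t(2k-1) + r`, the identity `C(2k,2) = k(2k-1)` makes the terms in `t`
cancel from `g(n,k) - h₁(n,k)`, leaving `2(g - h₁) = (r-k)(r-k-1)` (`two_mul_g_eq`). A product of
two consecutive integers is nonnegative and vanishes only if one factor does, so `h₁ ≤ g` with
equality iff `r ∈ {k, k+1}`. Both `k` and `k+1` lie in `[2, 2k]`, a complete system of residues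
modulo `2k-1`, so by uniqueness of the representation (`rep_unique`) any way of writing `n` with
remainder `k` or `k+1` is the given one.
-/

/-- A subtraction-free form of `C(n,2) = n(n-1)/2`. -/
theorem two_mul_choose_two_add (n : ℕ) : 2 * n.choose 2 + n = n * n := by
  induction n with
  | zero => rfl
  | succ m ih =>
    have h : (m + 1).choose 2 = m + m.choose 2 := by
      rw [Nat.choose_succ_succ' m 1, Nat.choose_one_right]
    rw [h]
    linarith

/-- The identity `2g = 2h₁ + (r-k)(r-k-1)`, over `ℤ` so that the factors may be negative. -/
theorem two_mul_g_eq (k n t r : ℕ) (hk : 2 ≤ k) (hn : k ≤ n) (hrep : n = t * (2 * k - 1) + r) :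
    2 * ((t * (2 * k).choose 2 + r.choose 2 : ℕ) : ℤ) =
      2 * ((k.choose 2 + k * (n - k) : ℕ) : ℤ) + ((r : ℤ) - k) * ((r : ℤ) - k - 1) := by
  have h1 : (2 * (k.choose 2 : ℤ) + k = k * k) := by exact_mod_cast two_mul_choose_two_add k
  have h2 : (2 * (r.choose 2 : ℤ) + r = r * r) := by exact_mod_cast two_mul_choose_two_add r
  have h3 : (2 * ((2 * k).choose 2 : ℤ) + 2 * k = 2 * k * (2 * k)) := by
    exact_mod_cast two_mul_choose_two_add (2 * k)
  have h4 : (n : ℤ) = t * (2 * k - 1) + r := by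
    rw [hrep]
    push_cast [Nat.cast_sub (show 1 ≤ 2 * k by omega)]
    ring
  push_cast [Nat.cast_sub hn]
  linear_combination (t : ℤ) * h3 + h2 - h1 - 2 * (k : ℤ) * h4

/-- Remainders taken in `[2, 2k]`, a window of `2k-1` consecutive integers, are unique. -/
theorem rep_unique (k t t' r r' : ℕ) (hr2 : 2 ≤ r) (hr : r ≤ 2 * k) (hr2' : 2 ≤ r')
    (hr' : r' ≤ 2 * k) (h : t * (2 * k - 1) + r = t' * (2 * k - 1) + r') : r = r' := by
  rcases lt_trichotomy t t' with hlt | rfl | hlt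
  · have := Nat.mul_le_mul_right (2 * k - 1) (Nat.succ_le_of_lt hlt)
    rw [Nat.succ_mul] at this
    omega
  · omega
  · have := Nat.mul_le_mul_right (2 * k - 1) (Nat.succ_le_of_lt hlt)
    rw [Nat.succ_mul] at this
    omega

/-- For `k ≥ 2` and `n ≥ k`, writing `n = (s-1)(2k-1) + r` with `s ≥ 1`, `2 ≤ r ≤ 2k`,
we have `h₁(n,k) = C(k,2) + k(n-k) ≤ g(n,k) = (s-1)·C(2k,2) + C(r,2)`, with equality iff
`n` is of the form `(s'-1)(2k-1) + r'` for some `s' ≥ 1` and `r' ∈ {k, k+1}`. -/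
theorem h1_le_g (k n s r : ℕ) (hk : 2 ≤ k) (hn : k ≤ n) (hs : 1 ≤ s)
    (hr2 : 2 ≤ r) (hr : r ≤ 2 * k) (hrep : n = (s - 1) * (2 * k - 1) + r) :
    Nat.choose k 2 + k * (n - k) ≤ (s - 1) * Nat.choose (2 * k) 2 + Nat.choose r 2 ∧
    (Nat.choose k 2 + k * (n - k) = (s - 1) * Nat.choose (2 * k) 2 + Nat.choose r 2 ↔
      ∃ s' : ℕ, 1 ≤ s' ∧
        (n = (s' - 1) * (2 * k - 1) + k ∨ n = (s' - 1) * (2 * k - 1) + (k + 1))) := by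
  have key := two_mul_g_eq k n (s - 1) r hk hn hrep
  have hnonneg : 0 ≤ ((r : ℤ) - k) * ((r : ℤ) - k - 1) := by
    rcases le_or_gt r k with h | h
    · exact mul_nonneg_of_nonpos_of_nonpos (by omega) (by omega)
    · exact mul_nonneg (by omega) (by omega)
  refine ⟨by omega, ?_⟩
  constructor
  · intro heq
    have h0 : ((r : ℤ) - k) * ((r : ℤ) - k - 1) = 0 := by omega
    refine ⟨s, hs, ?_⟩
    rcases mul_eq_zero.mp h0 with h | h
    · left; omega
    · right; omega
  · rintro ⟨s', -, h | h⟩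
    · have hrk : r = k :=
        rep_unique k (s - 1) (s' - 1) r k hr2 hr hk (by omega) (hrep.symm.trans h)
      have h0 : ((r : ℤ) - k) * ((r : ℤ) - k - 1) = 0 := by rw [hrk]; ring
      omega
    · have hrk : r = k + 1 :=
        rep_unique k (s - 1) (s' - 1) r (k + 1) hr2 hr (by omega) (by omega) (hrep.symm.trans h)
      have h0 : ((r : ℤ) - k) * ((r : ℤ) - k - 1) = 0 := by rw [hrk]; push_cast; ring
      omega
end
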